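/- arXiv:1402.1308 — 2 statements merged into one kernel-verified Lean document; each statement's English description precedes it below -/
import Mathlib

section
/- Let d ≥ 1, D := {1,...,d}, let B ⊆ D with |B| > 1, and let Q be a Young function such that L_Q(I^d) is not contained in L log^{|B|-1} L(I^d). Then the set of functions f ∈ L_Q(I^d) for which the means (L_{n(B)}∘R_{n(B')})(f) converge in Lebesgue measure on I^d (as n → ∞) to an almost everywhere finite function is of first Baire category (meager) in the normed space (L_Q(I^d), ‖·‖_{L_Q}); here n(B) denotes the index vector all of whose coordinates equal n. -/
open MeasureTheory Filter

noncomputable section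

/-- The unit cube `[0,1)^d`. -/
def unitCube (d : ℕ) : Set (Fin d → ℝ) := Set.univ.pi fun _ => Set.Ico (0:ℝ) 1

/-- Lebesgue measure restricted to the unit cube `[0,1)^d`. -/
def cubeMeasure (d : ℕ) : Measure (Fin d → ℝ) := volume.restrict (unitCube d)

/-- The `1`-periodic function equal to `1` on `[0,1/2)` and to `-1` on `[1/2,1)`. -/
def r0 (x : ℝ) : ℝ := if Int.fract x < 1/2 then 1 else -1

/-- The Rademacher functions. -/
def rademacher (n : ℕ) (x : ℝ) : ℝ := r0 (2 ^ n * x)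

/-- The Walsh functions (in Paley enumeration, via binary digits). -/
def walsh (n : ℕ) (x : ℝ) : ℝ :=
  ∏ k ∈ Finset.range (n + 1), if n.testBit k then rademacher k x else 1

/-- The Walsh–Dirichlet kernel `D_n`. -/
def dirichletKernel (n : ℕ) (x : ℝ) : ℝ := ∑ k ∈ Finset.range n, walsh k x

/-- `l_n = ∑_{k=1}^{n-1} 1/k`. -/
def logSum (n : ℕ) : ℝ := ∑ k ∈ Finset.Icc 1 (n - 1), (1 : ℝ) / k

/-- The Nörlund logarithmic kernel `F_n`. -/
def FKernel (n : ℕ) (u : ℝ) : ℝ :=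
  (1 / logSum n) * ∑ i ∈ Finset.Ico 1 n, dirichletKernel (n - i) u / i

/-- The Riesz logarithmic kernel `G_n`. -/
def GKernel (n : ℕ) (u : ℝ) : ℝ :=
  (1 / logSum n) * ∑ i ∈ Finset.Ico 1 n, dirichletKernel i u / i

/-- Walsh–Fourier coefficient of `f` on the unit cube. -/
def walshCoef {d : ℕ} (f : (Fin d → ℝ) → ℝ) (j : Fin d → ℕ) : ℝ :=
  ∫ x, f x * ∏ i, walsh (j i) (x i) ∂(cubeMeasure d)

/-- Rectangular partial sums of the multiple Walsh–Fourier series. -/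
def rectPartialSum {d : ℕ} (f : (Fin d → ℝ) → ℝ) (N : Fin d → ℕ) (x : Fin d → ℝ) : ℝ :=
  ∑ j ∈ Fintype.piFinset (fun i => Finset.range (N i)),
    walshCoef f j * ∏ i, walsh (j i) (x i)

/-- The mixed logarithmic means `(L_{n_B} ∘ R_{n_{B'}})(f)`. -/
def mixedLogMean {d : ℕ} (B : Finset (Fin d)) (f : (Fin d → ℝ) → ℝ)
    (n : Fin d → ℕ) (x : Fin d → ℝ) : ℝ :=
  (∏ j, logSum (n j))⁻¹ *
    ∑ i ∈ Fintype.piFinset (fun j => Finset.Ico 1 (n j)),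
      rectPartialSum f (fun j => if j ∈ B then n j - i j else i j) x / ∏ j, (i j : ℝ)

/-- A Young function: convex, continuous, even, vanishing at `0`, with
`Q(u)/u → ∞` at `+∞` and `Q(u)/u → 0` at `0`. -/
structure YoungFunction where
  toFun : ℝ → ℝ
  nonneg : ∀ u, 0 ≤ toFun u
  convexOn : ConvexOn ℝ Set.univ toFun
  continuous : Continuous toFun
  even : ∀ u, toFun (-u) = toFun u
  map_zero : toFun 0 = 0
  tendsto_atTop : Tendsto (fun u => toFun u / u) atTop atTop
  tendsto_zero : Tendsto (fun u => toFun u / u) (nhdsWithin 0 {(0:ℝ)}ᶜ) (nhds 0)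

/-- The set of admissible constants `k` in the Luxemburg norm of `f`. -/
def orliczSet {d : ℕ} (Q : YoungFunction) (f : (Fin d → ℝ) → ℝ) : Set ℝ :=
  {k | 0 < k ∧ Integrable (fun x => Q.toFun (|f x| / k)) (cubeMeasure d) ∧
    ∫ x, Q.toFun (|f x| / k) ∂(cubeMeasure d) ≤ 1}

/-- `f` belongs to the Orlicz space `L_Q(I^d)`. -/
def MemOrlicz {d : ℕ} (Q : YoungFunction) (f : (Fin d → ℝ) → ℝ) : Prop :=
  Measurable f ∧ (orliczSet Q f).Nonempty

/-- The Luxemburg norm on the Orlicz space `L_Q(I^d)`. -/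
def orliczNorm {d : ℕ} (Q : YoungFunction) (f : (Fin d → ℝ) → ℝ) : ℝ :=
  sInf (orliczSet Q f)

/-- `p_n = 2^{2n} + 2^{2n-2} + ⋯ + 2^0`. -/
def pIdx (n : ℕ) : ℕ := ∑ k ∈ Finset.range (n + 1), 4 ^ k

/-- `m̃ = ⌊ l_{p_{⌊m/2⌋}-1}/16 - 2^15 ⌋`. -/
def mTilde (m : ℕ) : ℤ := ⌊logSum (pIdx (m / 2) - 1) / 16 - 2 ^ 15⌋

/-- `m₀ = min{m : m̃ > 1}`. -/
def m₀ : ℕ := sInf {m : ℕ | 1 < mTilde m}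

/-- The set `Ω_n`. -/
def Omega (n : ℕ) : Set ℝ :=
  ⋃ m ∈ Finset.Icc n (2 * n),
    Set.Ico ((2:ℝ) ^ (-(m:ℤ) - 1) + (2:ℝ) ^ (-(m:ℤ) - mTilde m)) ((2:ℝ) ^ (-(m:ℤ)))

/-- `k`-th binary digit of `x` (the expansion not terminating in `1`'s). -/
def binDigit (k : ℕ) (x : ℝ) : ℕ := (⌊x * 2 ^ (k + 1)⌋).toNat % 2

/-- Dyadic addition on `[0,1)`. -/
def dyadicAdd (x t : ℝ) : ℝ :=
  ∑' k : ℕ, |(binDigit k x : ℝ) - (binDigit k t : ℝ)| / 2 ^ (k + 1)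

/-- Dyadic convolution `f ∗ K` on `[0,1)`. -/
def dyadicConv (f K : ℝ → ℝ) (x : ℝ) : ℝ :=
  ∫ t in Set.Ico (0:ℝ) 1, f t * K (dyadicAdd x t)

/-- Lebesgue measure restricted to `[0,1)`. -/
def unitMeasure : Measure ℝ := volume.restrict (Set.Ico (0:ℝ) 1)

/-- A set `A ⊆ L_Q(I^d)` is nowhere dense w.r.t. the Luxemburg norm. -/
def OrliczNowhereDense {d : ℕ} (Q : YoungFunction) (A : Set ((Fin d → ℝ) → ℝ)) : Prop :=
  ∀ f, MemOrlicz Q f → ∀ ε > 0, ∃ g, MemOrlicz Q g ∧ ∃ δ > 0,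
    (∀ h, MemOrlicz Q h → orliczNorm Q (h - g) < δ → orliczNorm Q (h - f) < ε) ∧
    (∀ h, MemOrlicz Q h → orliczNorm Q (h - g) < δ → h ∉ A)

/-- A set `A ⊆ L_Q(I^d)` is of first Baire category (meager) w.r.t. the Luxemburg norm. -/
def OrliczMeager {d : ℕ} (Q : YoungFunction) (A : Set ((Fin d → ℝ) → ℝ)) : Prop :=
  ∃ F : ℕ → Set ((Fin d → ℝ) → ℝ), (∀ k, OrliczNowhereDense Q (F k)) ∧ A ⊆ ⋃ k, F k

lemma rademacher_cases (n : ℕ) (x : ℝ) : rademacher n x = 1 ∨ rademacher n x = -1 := by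
  unfold rademacher r0; split_ifs <;> simp

lemma rademacher_mul_self (n : ℕ) (x : ℝ) : rademacher n x * rademacher n x = 1 := by
  rcases rademacher_cases n x with h | h <;> rw [h] <;> norm_num

lemma rademacher_succ (n : ℕ) (x : ℝ) : rademacher (n+1) x = rademacher n (2*x) := by
  unfold rademacher; rw [pow_succ, mul_assoc]

lemma rademacher_periodic (n : ℕ) : Function.Periodic (rademacher n) 1 := by
  intro x
  unfold rademacher r0
  have : Int.fract ((2:ℝ)^n * (x+1)) = Int.fract ((2:ℝ)^n * x) := by
    have : (2:ℝ)^n * (x+1) = 2^n * x + ((2^n : ℕ) : ℝ) := by push_cast; ring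
    rw [this, Int.fract_add_natCast]
  rw [this]

lemma measurable_rademacher (n : ℕ) : Measurable (rademacher n) := by
  unfold rademacher r0
  refine Measurable.ite ?_ measurable_const measurable_const
  exact measurableSet_lt (measurable_fract.comp (measurable_const.mul measurable_id)) measurable_const

lemma abs_rademacher (n : ℕ) (x : ℝ) : |rademacher n x| = 1 := by
  rcases rademacher_cases n x with h | h <;> rw [h] <;> norm_num

/-- generic Riesz-type product -/
def rprod (a b : ℕ → ℝ) (L : ℕ) (x : ℝ) : ℝ := ∏ k ∈ Finset.range L, (a k + b k * rademacher k x)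

lemma measurable_rprod (a b : ℕ → ℝ) (L : ℕ) : Measurable (rprod a b L) := by
  unfold rprod
  exact Finset.measurable_fun_prod _ fun k _ =>
    measurable_const.add (measurable_const.mul (measurable_rademacher k))

lemma rprod_bound (a b : ℕ → ℝ) (L : ℕ) (x : ℝ) :
    |rprod a b L x| ≤ ∏ k ∈ Finset.range L, (|a k| + |b k|) := by
  unfold rprod
  rw [Finset.abs_prod]
  refine Finset.prod_le_prod (fun _ _ => abs_nonneg _) fun k _ => ?_
  refine (abs_add_le _ _).trans ?_
  rw [abs_mul, abs_rademacher, mul_one]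

lemma rprod_intervalIntegrable (a b : ℕ → ℝ) (L : ℕ) (u v : ℝ) :
    IntervalIntegrable (rprod a b L) volume u v := by
  refine IntervalIntegrable.mono_fun' (g := fun _ => ∏ k ∈ Finset.range L, (|a k| + |b k|))
    intervalIntegrable_const (measurable_rprod a b L).aestronglyMeasurable ?_
  exact Filter.Eventually.of_forall fun x => by simpa using rprod_bound a b L x

lemma rademacher_zero_left {x : ℝ} (h0 : 0 ≤ x) (h1 : x < 1/2) : rademacher 0 x = 1 := by
  unfold rademacher r0
  have : Int.fract ((2:ℝ)^0 * x) = x := by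
    rw [pow_zero, one_mul, Int.fract_eq_self]; constructor <;> linarith
  rw [this, if_pos h1]

lemma rademacher_zero_right {x : ℝ} (h0 : 1/2 ≤ x) (h1 : x < 1) : rademacher 0 x = -1 := by
  unfold rademacher r0
  have : Int.fract ((2:ℝ)^0 * x) = x := by
    rw [pow_zero, one_mul, Int.fract_eq_self]; constructor <;> linarith
  rw [this, if_neg (by linarith)]

lemma rprod_succ (a b : ℕ → ℝ) (L : ℕ) (x : ℝ) : rprod a b (L+1) x =
    (a 0 + b 0 * rademacher 0 x) * rprod (fun k => a (k+1)) (fun k => b (k+1)) L (2*x) := by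
  unfold rprod
  rw [Finset.prod_range_succ', mul_comm]
  simp only [rademacher_succ]

lemma integral_rprod (L : ℕ) : ∀ a b : ℕ → ℝ,
    ∫ x in (0:ℝ)..1, rprod a b L x = ∏ k ∈ Finset.range L, a k := by
  induction L with
  | zero => intro a b; simp [rprod]
  | succ L ih =>
    intro a b
    have hper : Function.Periodic (rprod (fun k => a (k+1)) (fun k => b (k+1)) L) 1 := by
      intro x
      unfold rprod
      exact Finset.prod_congr rfl fun k _ => by rw [rademacher_periodic k x]
    have e1 : ∫ x in (0:ℝ)..(1/2), rprod a b (L+1) x =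
        ∫ x in (0:ℝ)..(1/2), (a 0 + b 0) * rprod (fun k => a (k+1)) (fun k => b (k+1)) L (2*x) := by
      refine intervalIntegral.integral_congr_ae ?_
      have : ∀ᵐ x : ℝ, x ≠ 1/2 := by simp [ae_iff]
      filter_upwards [this] with x hx hm
      rw [Set.uIoc_of_le (by norm_num)] at hm
      rw [rprod_succ, rademacher_zero_left hm.1.le (lt_of_le_of_ne hm.2 hx), mul_one]
    have e2 : ∫ x in (1/2:ℝ)..1, rprod a b (L+1) x =
        ∫ x in (1/2:ℝ)..1, (a 0 - b 0) * rprod (fun k => a (k+1)) (fun k => b (k+1)) L (2*x) := by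
      refine intervalIntegral.integral_congr_ae ?_
      have : ∀ᵐ x : ℝ, x ≠ 1 := by simp [ae_iff]
      filter_upwards [this] with x hx hm
      rw [Set.uIoc_of_le (by norm_num)] at hm
      rw [rprod_succ, rademacher_zero_right hm.1.le (lt_of_le_of_ne hm.2 hx)]; ring
    rw [← intervalIntegral.integral_add_adjacent_intervals
      (rprod_intervalIntegrable a b (L+1) 0 (1/2)) (rprod_intervalIntegrable a b (L+1) (1/2) 1),
      e1, e2, intervalIntegral.integral_const_mul, intervalIntegral.integral_const_mul,
      intervalIntegral.integral_comp_mul_left _ (by norm_num),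
      intervalIntegral.integral_comp_mul_left _ (by norm_num)]
    have e3 := hper.intervalIntegral_add_eq 1 0
    have e4 := ih (fun k => a (k+1)) (fun k => b (k+1))
    norm_num at e3 ⊢
    rw [e3, e4, Finset.prod_range_succ']
    ring

lemma cubeMeasure_eq (d : ℕ) :
    cubeMeasure d = Measure.pi (fun _ : Fin d => (volume : Measure ℝ).restrict (Set.Ico 0 1)) := by
  unfold cubeMeasure unitCube
  rw [volume_pi, Measure.restrict_pi_pi]

instance (d : ℕ) : IsProbabilityMeasure (cubeMeasure d) := by
  rw [cubeMeasure_eq]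
  have : IsProbabilityMeasure ((volume : Measure ℝ).restrict (Set.Ico 0 1)) := ⟨by simp⟩
  infer_instance

lemma integral_rprod_cube {d : ℕ} (a b : Fin d → ℕ → ℝ) (L : ℕ) :
    ∫ x, ∏ j, rprod (a j) (b j) L (x j) ∂(cubeMeasure d) = ∏ j, ∏ k ∈ Finset.range L, a j k := by
  rw [cubeMeasure_eq, integral_fintype_prod_eq_prod]
  refine Finset.prod_congr rfl fun j _ => ?_
  rw [← integral_rprod L (a j) (b j), intervalIntegral.integral_of_le zero_le_one,
    integral_Ico_eq_integral_Ioc]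

lemma integrable_rprod_cube {d : ℕ} (a b : Fin d → ℕ → ℝ) (L : ℕ) :
    Integrable (fun x : Fin d → ℝ => ∏ j, rprod (a j) (b j) L (x j)) (cubeMeasure d) := by
  refine Integrable.of_bound (C := ∏ j, ∏ k ∈ Finset.range L, (|a j k| + |b j k|)) ?_ ?_
  · refine Measurable.aestronglyMeasurable ?_
    exact Finset.measurable_fun_prod _ fun j _ => (measurable_rprod _ _ _).comp (measurable_pi_apply j)
  · refine Filter.Eventually.of_forall fun x => ?_
    rw [Real.norm_eq_abs, Finset.abs_prod]
    exact Finset.prod_le_prod (fun _ _ => abs_nonneg _) fun j _ => rprod_bound _ _ _ _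

/-- abstract Walsh product -/
def Wal (j : ℕ) (ρ : ℕ → ℝ) : ℝ := ∏ k ∈ Finset.range (j+1), if j.testBit k then ρ k else 1

lemma Wal_eq {j L : ℕ} (h : j < 2^L) (ρ : ℕ → ℝ) :
    Wal j ρ = ∏ k ∈ Finset.range L, if j.testBit k then ρ k else 1 := by
  have aux : ∀ La Lb : ℕ, j < 2^La → La ≤ Lb →
      ∏ k ∈ Finset.range La, (if j.testBit k then ρ k else 1) =
      ∏ k ∈ Finset.range Lb, (if j.testBit k then ρ k else 1) := by
    intro La Lb h1 h2
    refine Finset.prod_subset (Finset.range_mono h2) fun k _ hk => ?_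
    have hk' : La ≤ k := by simpa using hk
    rw [if_neg]
    rw [Nat.testBit_lt_two_pow (h1.trans_le (Nat.pow_le_pow_right (by norm_num) hk'))]; simp
  have hj : j < 2^(j+1) := (Nat.lt_succ_self j).trans (Nat.lt_two_pow_self)
  unfold Wal
  rcases le_total L (j+1) with hl | hl
  · exact (aux _ _ h hl).symm
  · exact aux _ _ hj hl

lemma walsh_eq_Wal (j : ℕ) (x : ℝ) : walsh j x = Wal j (fun k => rademacher k x) := rfl

lemma Wal_mul (j : ℕ) (ρ σ : ℕ → ℝ) : Wal j ρ * Wal j σ = Wal j (fun k => ρ k * σ k) := by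
  unfold Wal
  rw [← Finset.prod_mul_distrib]
  refine Finset.prod_congr rfl fun k _ => ?_
  split_ifs <;> simp

lemma Wal_congr {j L : ℕ} (h : j < 2^L) {ρ σ : ℕ → ℝ} (hρ : ∀ k < L, ρ k = σ k) :
    Wal j ρ = Wal j σ := by
  rw [Wal_eq h, Wal_eq h]
  exact Finset.prod_congr rfl fun k hk => by rw [hρ k (by simpa using hk)]

lemma walsh_shift (κ j : ℕ) (x : ℝ) :
    walsh (2^κ * j) x = Wal j (fun k => rademacher (κ + k) x) := by
  have hj : j < 2^j := Nat.lt_two_pow_self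
  have h2 : 2^κ * j < 2^(κ+j) := by rw [pow_add]; exact Nat.mul_lt_mul_of_pos_left hj (by positivity)
  rw [walsh_eq_Wal, Wal_eq h2, Wal_eq hj, Finset.prod_range_add]
  have : ∏ k ∈ Finset.range κ, (if (2^κ*j).testBit k then rademacher k x else 1) = 1 := by
    refine Finset.prod_eq_one fun k hk => ?_
    rw [Nat.testBit_two_pow_mul, if_neg]
    have : k < κ := by simpa using hk
    simp; omega
  rw [this, one_mul]
  refine Finset.prod_congr rfl fun k _ => ?_
  rw [Nat.testBit_two_pow_mul]; simp

lemma abs_walsh (j : ℕ) (x : ℝ) : |walsh j x| = 1 := by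
  unfold walsh
  rw [Finset.abs_prod]
  refine Finset.prod_eq_one fun k _ => ?_
  split_ifs
  · exact abs_rademacher _ _
  · simp

lemma measurable_walsh (j : ℕ) : Measurable (walsh j) := by
  unfold walsh
  refine Finset.measurable_fun_prod _ fun k _ => ?_
  split_ifs
  · exact measurable_rademacher k
  · exact measurable_const

lemma meanFormula {d : ℕ} {ι : Type*} [Fintype ι] (B : Finset (Fin d)) (f : (Fin d → ℝ) → ℝ) (n : ℕ)
    (u : ι → ℝ) (θ : ι → Fin d → ℕ → ℝ)
    (hf : ∀ α : Fin d → ℕ, (∀ j, α j < n) → walshCoef f α = ∑ c, u c * ∏ j, θ c j (α j))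
    (x : Fin d → ℝ) :
    mixedLogMean B f (fun _ => n) x = ∑ c, u c * ∏ j, ((logSum n)⁻¹ *
      ∑ i ∈ Finset.Ico 1 n, (∑ α ∈ Finset.range (if j ∈ B then n - i else i),
        θ c j α * walsh α (x j)) / (i:ℝ)) := by
  have h1 : ∀ i ∈ Fintype.piFinset (fun _ : Fin d => Finset.Ico 1 n),
      rectPartialSum f (fun j => if j ∈ B then n - i j else i j) x / ∏ j, (i j : ℝ) =
      ∑ c, u c * ∏ j, ((∑ α ∈ Finset.range (if j ∈ B then n - i j else i j),
        θ c j α * walsh α (x j)) / (i j:ℝ)) := by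
    intro i hi
    rw [Fintype.mem_piFinset] at hi
    unfold rectPartialSum
    have h2 : ∀ α ∈ Fintype.piFinset
        (fun j => Finset.range (if j ∈ B then n - i j else i j)),
        walshCoef f α * ∏ j, walsh (α j) (x j) = ∑ c, u c * ∏ j, (θ c j (α j) * walsh (α j) (x j)) := by
      intro α hα
      rw [Fintype.mem_piFinset] at hα
      rw [hf α, Finset.sum_mul]
      · refine Finset.sum_congr rfl fun c _ => ?_
        rw [Finset.prod_mul_distrib, mul_assoc]
      · intro j
        have := hα j; have h3 := hi j
        rw [Finset.mem_range] at this
        rw [Finset.mem_Ico] at h3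
        split_ifs at this <;> omega
    rw [Finset.sum_congr rfl h2, Finset.sum_comm, Finset.sum_div]
    refine Finset.sum_congr rfl fun c _ => ?_
    rw [← Finset.mul_sum, Finset.prod_div_distrib, Finset.prod_univ_sum, mul_div_assoc]
  unfold mixedLogMean
  rw [Finset.sum_congr rfl h1, Finset.sum_comm, Finset.mul_sum]
  refine Finset.sum_congr rfl fun c _ => ?_
  rw [← Finset.mul_sum, Finset.prod_mul_distrib, Finset.prod_univ_sum, Finset.prod_inv_distrib]
  ring

lemma factor_norlund (n : ℕ) (F : ℕ → ℝ) :
    (logSum n)⁻¹ * ∑ i ∈ Finset.Ico 1 n, (∑ α ∈ Finset.range (n - i), F α) / (i:ℝ) =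
      ∑ α ∈ Finset.range n, F α * (logSum (n - α) / logSum n) := by
  have h1 : ∑ i ∈ Finset.Ico 1 n, (∑ α ∈ Finset.range (n - i), F α) / (i:ℝ) =
      ∑ α ∈ Finset.range n, ∑ i ∈ Finset.Icc 1 (n - α - 1), F α / (i:ℝ) := by
    simp_rw [Finset.sum_div]
    refine Finset.sum_comm' fun i α => ?_
    simp only [Finset.mem_Ico, Finset.mem_range, Finset.mem_Icc]
    omega
  rw [h1, Finset.mul_sum]
  refine Finset.sum_congr rfl fun α _ => ?_
  unfold logSum
  rw [div_eq_mul_inv (∑ k ∈ Finset.Icc 1 (n - α - 1), (1:ℝ)/k), Finset.sum_mul, Finset.mul_sum,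
    Finset.mul_sum]
  refine Finset.sum_congr rfl fun i _ => ?_
  ring

lemma logSum_pos {n : ℕ} (hn : 2 ≤ n) : 0 < logSum n := by
  unfold logSum
  refine Finset.sum_pos (fun i hi => ?_) ⟨1, by simp; omega⟩
  have : 1 ≤ i := (Finset.mem_Icc.1 hi).1
  positivity

lemma factor_riesz {n : ℕ} (hn : 2 ≤ n) (F : ℕ → ℝ) (h0 : F 0 = 1) (hF : ∀ α < n, α ≠ 0 → F α = 0) :
    (logSum n)⁻¹ * ∑ i ∈ Finset.Ico 1 n, (∑ α ∈ Finset.range i, F α) / (i:ℝ) = 1 := by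
  have h1 : ∑ i ∈ Finset.Ico 1 n, (∑ α ∈ Finset.range i, F α) / (i:ℝ) = logSum n := by
    unfold logSum
    have : Finset.Icc 1 (n-1) = Finset.Ico 1 n := by ext; simp; omega
    rw [this]
    refine Finset.sum_congr rfl fun i hi => ?_
    rw [Finset.mem_Ico] at hi
    rw [Finset.sum_eq_single 0, h0]
    · intro α hα hne; exact hF α ((Finset.mem_range.1 hα).trans hi.2) hne
    · intro h; simp at h; omega
  rw [h1, inv_mul_cancel₀ (ne_of_gt (logSum_pos hn))]

/-- signs of a bit vector -/
def sgx {M : ℕ} (c : Fin M → Bool) (k : ℕ) : ℝ :=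
  if h : k < M then (if c ⟨k, h⟩ then 1 else -1) else 1

lemma sgx_cases {M : ℕ} (c : Fin M → Bool) (k : ℕ) : sgx c k = 1 ∨ sgx c k = -1 := by
  unfold sgx; split_ifs <;> simp

def dig (κ M : ℕ) (x : ℝ) : Fin M → Bool := fun k => decide (rademacher (κ + k) x = 1)

lemma sgx_dig {κ M : ℕ} (x : ℝ) {k : ℕ} (hk : k < M) : sgx (dig κ M x) k = rademacher (κ + k) x := by
  unfold sgx dig
  rw [dif_pos hk]
  rcases rademacher_cases (κ + k) x with h | h
  · simp [h]
  · simp only [h]; norm_num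

lemma measurable_dig (κ M : ℕ) : Measurable (dig κ M) := by
  refine measurable_pi_lambda _ fun k => ?_
  unfold dig
  exact (measurable_to_bool (f := fun x => decide (rademacher (κ + k) x = 1)) (by
    have : (fun x => decide (rademacher (κ + ↑k) x = 1)) ⁻¹' {true} = rademacher (κ+k) ⁻¹' {1} := by
      ext; simp
    rw [this]
    exact measurable_rademacher _ (measurableSet_singleton _)))

/-- indicator of a dyadic cell -/
def ind (κ M : ℕ) (c : Fin M → Bool) (x : ℝ) : ℝ :=
  ∏ k ∈ Finset.range M, (1/2 + sgx c k / 2 * rademacher (κ + k) x)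

lemma sgx_inj {M : ℕ} {c c' : Fin M → Bool} (h : ∀ k < M, sgx c k = sgx c' k) : c = c' := by
  funext k
  have := h k k.2
  unfold sgx at this
  rw [dif_pos k.2, dif_pos k.2] at this
  simp only [Fin.eta] at this
  cases h1 : c k <;> cases h2 : c' k <;> simp_all <;> norm_num at this

lemma ind_eq (κ M : ℕ) (c : Fin M → Bool) (x : ℝ) :
    ind κ M c x = if dig κ M x = c then 1 else 0 := by
  unfold ind
  split_ifs with h
  · refine Finset.prod_eq_one fun k hk => ?_
    rw [← h, sgx_dig x (by simpa using hk)]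
    have := rademacher_mul_self (κ + k) x
    linarith
  · by_contra hne
    apply h
    refine sgx_inj fun k hk => ?_
    rw [sgx_dig x hk]
    have := Finset.prod_ne_zero_iff.1 hne k (by simpa using hk)
    rcases rademacher_cases (κ + k) x with h1 | h1 <;> rcases sgx_cases c k with h2 | h2 <;>
      rw [h1, h2] at this ⊢ <;> norm_num at this

def aC (κ α : ℕ) (p : Prop) [Decidable p] (ρ : ℕ → ℝ) (k : ℕ) : ℝ :=
  if κ ≤ k ∧ p then (if α.testBit k then ρ (k - κ) / 2 else 1/2) else (if α.testBit k then 0 else 1)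

def bC (κ α : ℕ) (p : Prop) [Decidable p] (ρ : ℕ → ℝ) (k : ℕ) : ℝ :=
  if κ ≤ k ∧ p then (if α.testBit k then 1/2 else ρ (k - κ) / 2) else (if α.testBit k then 1 else 0)

lemma ind_mul_walsh {κ M α : ℕ} (hα : α < 2^(κ+M)) (p : Prop) [Decidable p] (c : Fin M → Bool) (x : ℝ) :
    (if p then ind κ M c x else 1) * walsh α x =
      rprod (aC κ α p (sgx c)) (bC κ α p (sgx c)) (κ + M) x := by
  rw [walsh_eq_Wal, Wal_eq hα]
  unfold rprod
  by_cases hp : p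
  · rw [if_pos hp, Finset.prod_range_add, Finset.prod_range_add, mul_left_comm]
    unfold ind
    rw [← Finset.prod_mul_distrib]
    congr 1
    · refine Finset.prod_congr rfl fun k hk => ?_
      have : ¬ κ ≤ k := by simpa using hk
      unfold aC bC
      have hk2 : ¬ (κ ≤ k ∧ p) := by tauto
      simp only [if_neg hk2]
      split_ifs <;> simp
    · refine Finset.prod_congr rfl fun k hk => ?_
      unfold aC bC
      have hk2 : κ ≤ κ + k ∧ p := ⟨by omega, hp⟩
      simp only [if_pos hk2]
      have := rademacher_mul_self (κ + k) x
      split_ifs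
      · rw [Nat.add_sub_cancel_left]; linear_combination (sgx c k)/2 * this
      · rw [Nat.add_sub_cancel_left]; ring
  · rw [if_neg hp, one_mul]
    refine Finset.prod_congr rfl fun k hk => ?_
    unfold aC bC
    have hk2 : ¬ (κ ≤ k ∧ p) := by tauto
    simp only [if_neg hk2]
    split_ifs <;> simp

def thetaC (κ M α : ℕ) (p : Prop) [Decidable p] (c : Fin M → Bool) : ℝ :=
  ∏ k ∈ Finset.range (κ+M), aC κ α p (sgx c) k

lemma thetaC_false {κ M α : ℕ} {p : Prop} [Decidable p] (hp : ¬ p) (hα : α < 2^(κ+M))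
    (c : Fin M → Bool) : thetaC κ M α p c = if α = 0 then 1 else 0 := by
  unfold thetaC aC
  split_ifs with h
  · subst h
    exact Finset.prod_eq_one fun k _ => by rw [if_neg (by tauto)]; simp
  · obtain ⟨k, hk⟩ := Nat.exists_testBit_of_ne_zero h
    refine Finset.prod_eq_zero (i := k) ?_ ?_
    · rw [Finset.mem_range]
      by_contra hc
      rw [Nat.testBit_lt_two_pow (hα.trans_le (Nat.pow_le_pow_right (by norm_num) (by omega)))] at hk
      simp at hk
    · rw [if_neg (by tauto), if_pos hk]

lemma thetaC_mul {κ M j : ℕ} {p : Prop} [Decidable p] (hp : p) (hj : j < 2^M)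
    (c : Fin M → Bool) : thetaC κ M (2^κ * j) p c = (1/2)^M * Wal j (sgx c) := by
  unfold thetaC aC
  rw [Finset.prod_range_add, Wal_eq hj, Finset.prod_eq_one, one_mul]
  · have : ((1:ℝ)/2)^M = ∏ k ∈ Finset.range M, (1/2:ℝ) := by simp
    rw [this, ← Finset.prod_mul_distrib]
    refine Finset.prod_congr rfl fun k _ => ?_
    rw [if_pos ⟨by omega, hp⟩, Nat.testBit_two_pow_mul, Nat.add_sub_cancel_left]
    have : κ ≤ κ + k := by omega
    simp only [this, decide_true, Bool.true_and]
    split_ifs <;> ring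
  · intro k hk
    have : k < κ := by simpa using hk
    rw [if_neg (by omega), Nat.testBit_two_pow_mul, if_neg]
    simp; omega

lemma thetaC_ndvd {κ M α : ℕ} {p : Prop} [Decidable p] (hα : ¬ 2^κ ∣ α)
    (c : Fin M → Bool) : thetaC κ M α p c = 0 := by
  have : ∃ k < κ, α.testBit k = true := by
    by_contra hc
    push Not at hc
    apply hα
    apply Nat.dvd_of_mod_eq_zero
    refine Nat.eq_of_testBit_eq fun i => ?_
    rw [Nat.testBit_mod_two_pow]
    simp
    intro hi
    simpa using hc i hi
  obtain ⟨k, hk, hb⟩ := this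
  unfold thetaC aC
  refine Finset.prod_eq_zero (i := k) (by simp; omega) ?_
  rw [if_neg (by omega), if_pos hb]

lemma sum_range_mul {κ n' : ℕ} (F : ℕ → ℝ) (hF : ∀ α, ¬ 2^κ ∣ α → F α = 0) :
    ∑ α ∈ Finset.range (2^κ * n'), F α = ∑ j ∈ Finset.range n', F (2^κ * j) := by
  have hpos : 0 < 2^κ := by positivity
  symm
  rw [← Finset.sum_image (s := Finset.range n') (g := fun j => 2^κ * j)]
  · refine Finset.sum_subset ?_ ?_
    · intro a ha
      obtain ⟨j, hj, rfl⟩ := Finset.mem_image.1 ha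
      rw [Finset.mem_range] at hj ⊢
      exact Nat.mul_lt_mul_of_pos_left hj hpos
    · intro a ha hn
      apply hF
      rintro ⟨j, rfl⟩
      apply hn
      rw [Finset.mem_range] at ha
      exact Finset.mem_image.2 ⟨j, Finset.mem_range.2 (lt_of_mul_lt_mul_left' ha), rfl⟩
  · intro a _ b _ h
    exact Nat.eq_of_mul_eq_mul_left hpos h

/-- extend bit data from `B` -/
def extB {d M : ℕ} (B : Finset (Fin d)) (c : B → Fin M → Bool) (j : Fin d) : Fin M → Bool :=
  if h : j ∈ B then c ⟨j, h⟩ else fun _ => true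

def digB {d : ℕ} (B : Finset (Fin d)) (κ M : ℕ) (x : Fin d → ℝ) : B → Fin M → Bool :=
  fun i => dig κ M (x i.1)

lemma measurable_digB {d : ℕ} (B : Finset (Fin d)) (κ M : ℕ) : Measurable (digB B κ M) :=
  measurable_pi_lambda _ fun _ => (measurable_dig κ M).comp (measurable_pi_apply _)

lemma prod_ind {d : ℕ} (B : Finset (Fin d)) (κ M : ℕ) (c : B → Fin M → Bool) (x : Fin d → ℝ) :
    ∏ j, (if j ∈ B then ind κ M (extB B c j) (x j) else 1) = if digB B κ M x = c then 1 else 0 := by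
  split_ifs with h
  · refine Finset.prod_eq_one fun j _ => ?_
    split_ifs with hj
    · rw [ind_eq, if_pos]
      unfold extB; rw [dif_pos hj, ← h]; rfl
    · rfl
  · have : ∃ i : B, dig κ M (x i) ≠ c i := by
      by_contra hc
      push Not at hc
      exact h (funext hc)
    obtain ⟨i, hi⟩ := this
    refine Finset.prod_eq_zero (Finset.mem_univ i.1) ?_
    rw [if_pos i.2, ind_eq, if_neg]
    unfold extB; rw [dif_pos i.2]; exact hi

lemma expand_digB {d : ℕ} (B : Finset (Fin d)) (κ M : ℕ) (F : (B → Fin M → Bool) → ℝ) (x : Fin d → ℝ) :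
    F (digB B κ M x) = ∑ c, F c * ∏ j, (if j ∈ B then ind κ M (extB B c j) (x j) else 1) := by
  simp_rw [prod_ind]
  simp

lemma walshCoef_digB {d : ℕ} (B : Finset (Fin d)) (κ M : ℕ) (F : (B → Fin M → Bool) → ℝ)
    (α : Fin d → ℕ) (hα : ∀ j, α j < 2^(κ+M)) :
    walshCoef (fun x => F (digB B κ M x)) α =
      ∑ c, F c * ∏ j, thetaC κ M (α j) (j ∈ B) (extB B c j) := by
  unfold walshCoef
  have h1 : ∀ x : Fin d → ℝ, F (digB B κ M x) * ∏ i, walsh (α i) (x i) =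
      ∑ c, F c * ∏ j, rprod (aC κ (α j) (j ∈ B) (sgx (extB B c j)))
        (bC κ (α j) (j ∈ B) (sgx (extB B c j))) (κ + M) (x j) := by
    intro x
    rw [expand_digB B κ M F x, Finset.sum_mul]
    refine Finset.sum_congr rfl fun c _ => ?_
    rw [mul_assoc, ← Finset.prod_mul_distrib]
    congr 1
    exact Finset.prod_congr rfl fun j _ => ind_mul_walsh (hα j) _ _ _
  simp_rw [h1]
  rw [integral_finsetSum]
  · refine Finset.sum_congr rfl fun c _ => ?_
    rw [integral_const_mul, integral_rprod_cube]
    rfl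
  · intro c _
    exact (integrable_rprod_cube _ _ _).const_mul _

lemma integrable_digB {d : ℕ} (B : Finset (Fin d)) (κ M : ℕ) (F : (B → Fin M → Bool) → ℝ) :
    Integrable (fun x => F (digB B κ M x)) (cubeMeasure d) := by
  refine Integrable.of_bound (C := ∑ c, |F c|) ?_ ?_
  · exact ((measurable_of_finite F).comp (measurable_digB B κ M)).aestronglyMeasurable
  · refine Filter.Eventually.of_forall fun x => ?_
    exact Finset.single_le_sum (f := fun c => |F c|) (fun _ _ => abs_nonneg _) (Finset.mem_univ _)

lemma integral_digB {d : ℕ} (B : Finset (Fin d)) (κ M : ℕ) (F : (B → Fin M → Bool) → ℝ) :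
    ∫ x, F (digB B κ M x) ∂(cubeMeasure d) = (1/2)^(M * B.card) * ∑ c, F c := by
  have h := walshCoef_digB B κ M F (fun _ => 0) (fun _ => by positivity)
  have hw : ∀ x, walsh 0 x = 1 := fun x => by simp [walsh]
  unfold walshCoef at h
  simp only [hw, Finset.prod_const_one, mul_one] at h
  rw [h, Finset.mul_sum]
  refine Finset.sum_congr rfl fun c _ => ?_
  rw [mul_comm]
  congr 1
  have : ∀ j, thetaC κ M 0 (j ∈ B) (extB B c j) = if j ∈ B then ((1:ℝ)/2)^M else 1 := by
    intro j
    split_ifs with hj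
    · have := thetaC_mul (κ := κ) (M := M) (j := 0) hj (by positivity) (extB B c j)
      rw [mul_zero] at this
      rw [this]; simp [Wal]
    · rw [thetaC_false hj (by positivity)]; simp
  simp_rw [this]
  rw [Finset.prod_ite_mem, Finset.univ_inter, Finset.prod_const, pow_mul]

lemma measure_digB {d : ℕ} (B : Finset (Fin d)) (κ M : ℕ) (G : Finset (B → Fin M → Bool)) :
    (cubeMeasure d).real {x | digB B κ M x ∈ G} = (1/2)^(M * B.card) * G.card := by
  have h := integral_digB B κ M (fun c => if c ∈ G then 1 else 0)
  rw [Finset.sum_ite_mem, Finset.univ_inter, Finset.sum_const, nsmul_eq_mul, mul_one] at h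
  rw [← h]
  have hm : MeasurableSet {x | digB B κ M x ∈ G} :=
    (measurable_digB B κ M) G.finite_toSet.measurableSet
  rw [← integral_indicator_one hm]
  refine integral_congr_ae (Filter.Eventually.of_forall fun x => ?_)
  simp [Set.indicator_apply]

/-- mean of a dyadic step function -/
lemma mean_digB {d : ℕ} (B : Finset (Fin d)) (κ M n' : ℕ) (F : (B → Fin M → Bool) → ℝ)
    (hn : n' ≤ 2^M) (hn2 : 2 ≤ 2^κ * n') (x : Fin d → ℝ) :
    mixedLogMean B (fun x => F (digB B κ M x)) (fun _ => 2^κ * n') x =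
      ∑ c, F c * ∏ i : B, ((1/2)^M * ∑ j ∈ Finset.range n',
        Wal j (fun k => sgx (c i) k * sgx (digB B κ M x i) k) *
          (logSum (2^κ * (n' - j)) / logSum (2^κ * n'))) := by
  have hle : 2^κ * n' ≤ 2^(κ+M) := by rw [pow_add]; exact Nat.mul_le_mul_left _ hn
  rw [meanFormula B _ _ F (fun c j α => thetaC κ M α (j ∈ B) (extB B c j))
    (fun α hα => walshCoef_digB B κ M F α fun j => (hα j).trans_le hle)]
  refine Finset.sum_congr rfl fun c _ => ?_
  congr 1
  have hj : ∀ j : Fin d, (logSum (2^κ * n'))⁻¹ *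
      ∑ i ∈ Finset.Ico 1 (2^κ * n'), (∑ α ∈ Finset.range (if j ∈ B then 2^κ * n' - i else i),
        thetaC κ M α (j ∈ B) (extB B c j) * walsh α (x j)) / (i:ℝ) =
      if j ∈ B then ((1/2)^M * ∑ l ∈ Finset.range n',
        Wal l (fun k => sgx (extB B c j) k * sgx (dig κ M (x j)) k) *
          (logSum (2^κ * (n' - l)) / logSum (2^κ * n'))) else 1 := by
    intro j
    split_ifs with hj
    · rw [factor_norlund, sum_range_mul, Finset.mul_sum]
      · refine Finset.sum_congr rfl fun l hl => ?_
        have hl' : l < 2^M := (Finset.mem_range.1 hl).trans_le hn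
        rw [thetaC_mul hj hl', walsh_shift, ← Nat.mul_sub, ← Wal_mul,
          Wal_congr hl' (ρ := sgx (dig κ M (x j))) (fun k hk => sgx_dig (x j) hk)]
        ring
      · intro α hα
        rw [thetaC_ndvd hα]; ring
    · refine factor_riesz hn2 _ ?_ ?_
      · rw [thetaC_false hj (by positivity)]; simp [walsh]
      · intro α hα h0
        rw [thetaC_false hj (hα.trans_le hle), if_neg h0, zero_mul]
  simp_rw [hj]
  rw [Finset.prod_ite_mem, Finset.univ_inter, ← Finset.prod_coe_sort]
  refine Finset.prod_congr rfl fun i _ => ?_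
  have : extB B c i = c i := by unfold extB; rw [dif_pos i.2]
  rw [this]; rfl

/-- abstract Dirichlet kernel -/
def KD (n : ℕ) (ρ : ℕ → ℝ) : ℝ := ∑ j ∈ Finset.range n, Wal j ρ

lemma Wal_one {j m : ℕ} (hj : j < 2^m) {ρ : ℕ → ℝ} (h : ∀ k < m, ρ k = 1) : Wal j ρ = 1 := by
  rw [Wal_eq hj]
  exact Finset.prod_eq_one fun k hk => by rw [h k (by simpa using hk)]; simp

lemma KD_small {n m : ℕ} (hn : n ≤ 2^m) {ρ : ℕ → ℝ} (h : ∀ k < m, ρ k = 1) : KD n ρ = n := by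
  unfold KD
  rw [Finset.sum_congr rfl fun j hj => Wal_one ((Finset.mem_range.1 hj).trans_le hn) h]
  simp

lemma Wal_add {a j : ℕ} (hj : j < 2^a) (ρ : ℕ → ℝ) : Wal (2^a + j) ρ = ρ a * Wal j ρ := by
  have h1 : 2^a + j < 2^(a+1) := by rw [pow_succ]; omega
  rw [Wal_eq h1, Wal_eq hj, Finset.prod_range_succ, mul_comm]
  congr 1
  · rw [if_pos]
    rw [Nat.testBit_two_pow_add_eq, Nat.testBit_lt_two_pow hj]; rfl
  · refine Finset.prod_congr rfl fun k hk => ?_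
    rw [Nat.testBit_two_pow_add_gt (by simpa using hk)]

lemma KD_add {a n0 : ℕ} (hn : n0 ≤ 2^a) (ρ : ℕ → ℝ) :
    KD (2^a + n0) ρ = KD (2^a) ρ + ρ a * KD n0 ρ := by
  unfold KD
  rw [Finset.sum_range_add, Finset.mul_sum]
  congr 1
  exact Finset.sum_congr rfl fun j hj => Wal_add ((Finset.mem_range.1 hj).trans_le hn) ρ

lemma KD_two_pow_zero {m : ℕ} {ρ : ℕ → ℝ} (h : ρ m = -1) {a : ℕ} (ha : m < a) : KD (2^a) ρ = 0 := by
  induction a, ha using Nat.le_induction with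
  | base =>
    have := KD_add (le_refl (2^m)) ρ
    rw [h] at this
    rw [Nat.succ_eq_add_one, pow_succ, mul_two, this]; ring
  | succ a _ ih =>
    have := KD_add (le_refl (2^a)) ρ
    rw [ih] at this
    rw [pow_succ, mul_two, this]; ring

lemma pIdx_succ (A : ℕ) : pIdx (A+1) = 2^(2*(A+1)) + pIdx A := by
  unfold pIdx; rw [Finset.sum_range_succ _ (A+1), pow_mul]; norm_num; ring

lemma pIdx_lt (A : ℕ) : pIdx A < 2^(2*A+1) := by
  induction A with
  | zero => simp [pIdx]
  | succ A ih => rw [pIdx_succ]; rw [show 2*(A+1)+1 = 2*A+1+1+1 by ring, show 2*(A+1)=2*A+1+1 by ring]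
                 simp only [pow_succ] at *; omega

lemma pIdx_ge (A : ℕ) : 2^(2*A) ≤ pIdx A := by
  cases A with
  | zero => simp [pIdx]
  | succ A => rw [pIdx_succ]; omega

lemma KD_pIdx {A m : ℕ} (hm : m ≤ 2*A) {ρ : ℕ → ℝ} (hρ : ∀ k, ρ k = 1 ∨ ρ k = -1)
    (h1 : ∀ k < m, ρ k = 1) (h2 : ρ m = -1) : (2:ℝ)^m / 2 ≤ |KD (pIdx A) ρ| := by
  induction A with
  | zero =>
    have : m = 0 := by omega
    subst this
    have : KD (pIdx 0) ρ = 1 := by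
      rw [KD_small (m := 0) (by simp [pIdx]) (by simp)]; simp [pIdx]
    rw [this]; norm_num
  | succ A ih =>
    have hle : pIdx A ≤ 2^(2*(A+1)) := (pIdx_lt A).le.trans (Nat.pow_le_pow_right (by norm_num) (by omega))
    rw [pIdx_succ, KD_add hle]
    rcases Nat.lt_or_ge m (2*(A+1)) with hlt | hge
    · rw [KD_two_pow_zero h2 hlt, zero_add, abs_mul]
      have : |ρ (2*(A+1))| = 1 := by rcases hρ (2*(A+1)) with h | h <;> rw [h] <;> simp
      rw [this, one_mul]
      rcases Nat.lt_or_ge m (2*A+1) with h3 | h3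
      · exact ih (by omega)
      · have hm' : m = 2*A+1 := by omega
        rw [KD_small (m := m) (by rw [hm']; exact (pIdx_lt A).le) h1, Nat.abs_cast, hm', pow_succ]
        have : ((2^(2*A) : ℕ):ℝ) ≤ pIdx A := by exact_mod_cast pIdx_ge A
        push_cast at this; linarith
    · have hm' : m = 2*(A+1) := by omega
      subst hm'
      rw [KD_small le_rfl h1, KD_small hle h1, h2]
      have : ((pIdx A : ℕ):ℝ) ≤ ((2^(2*A+1) : ℕ):ℝ) := by exact_mod_cast (pIdx_lt A).le
      push_cast at this ⊢
      refine le_trans ?_ (le_abs_self _)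
      rw [show 2*(A+1) = 2*A+1+1 by ring, pow_succ]
      linarith

/-- cells agreeing with `y` up to `m` and differing at `m` -/
def fdiff {M : ℕ} (y : Fin M → Bool) (m : ℕ) : Finset (Fin M → Bool) :=
  Fintype.piFinset fun k => if (k:ℕ) < m then {y k} else if (k:ℕ) = m then {!y k} else Finset.univ

lemma mem_fdiff {M : ℕ} {y c : Fin M → Bool} {m : ℕ} :
    c ∈ fdiff y m ↔ (∀ k : Fin M, (k:ℕ) < m → c k = y k) ∧ (∀ k : Fin M, (k:ℕ) = m → c k = !y k) := by
  unfold fdiff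
  rw [Fintype.mem_piFinset]
  constructor
  · intro h
    constructor
    · intro k hk; have := h k; rw [if_pos hk] at this; simpa using this
    · intro k hk; have := h k; rw [if_neg (by omega), if_pos hk] at this; simpa using this
  · rintro ⟨h1, h2⟩ k
    split_ifs with h3 h4
    · simpa using h1 k h3
    · simpa using h2 k h4
    · simp

lemma card_fdiff {M : ℕ} (y : Fin M → Bool) {m : ℕ} (hm : m < M) :
    (fdiff y m).card = 2^(M - m - 1) := by
  unfold fdiff
  rw [Fintype.card_piFinset]
  have : ∀ k : Fin M, (if (k:ℕ) < m then {y k} else if (k:ℕ) = m then {!y k} else Finset.univ : Finset Bool).card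
      = if (k:ℕ) < m + 1 then 1 else 2 := by
    intro k
    split_ifs <;> first | rfl | omega
  simp_rw [this]
  rw [Fin.prod_univ_eq_prod_range (fun k => if k < m+1 then 1 else 2) M]
  have hM : M = (m+1) + (M-m-1) := by omega
  conv_lhs => rw [hM]
  rw [Finset.prod_range_add, Finset.prod_eq_one, one_mul]
  · rw [Finset.prod_congr rfl (g := fun _ => 2)]
    · simp
    · intro k _; rw [if_neg (by omega)]
  · intro k hk; rw [if_pos (by simpa using hk)]

lemma fdiff_disj {M : ℕ} {y c : Fin M → Bool} {m m' : ℕ} (hm : m < M) (hm' : m' < M)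
    (h : c ∈ fdiff y m) (h' : c ∈ fdiff y m') : m = m' := by
  rw [mem_fdiff] at h h'
  rcases lt_trichotomy m m' with hl | hl | hl
  · have h1 := h.2 ⟨m, hm⟩ rfl
    have h2 := h'.1 ⟨m, hm⟩ hl
    rw [h1] at h2; simp at h2
  · exact hl
  · have h1 := h'.2 ⟨m', hm'⟩ rfl
    have h2 := h.1 ⟨m', hm'⟩ hl
    rw [h1] at h2; simp at h2

lemma KD_fdiff {A m : ℕ} (hm : m ≤ 2*A) {y c : Fin (2*A+1) → Bool} (h : c ∈ fdiff y m) :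
    (2:ℝ)^m / 2 ≤ |KD (pIdx A) (fun k => sgx c k * sgx y k)| := by
  rw [mem_fdiff] at h
  refine KD_pIdx hm ?_ ?_ ?_
  · intro k
    rcases sgx_cases c k with h1 | h1 <;> rcases sgx_cases y k with h2 | h2 <;> rw [h1, h2] <;> simp
  · intro k hk
    have := h.1 ⟨k, by omega⟩ hk
    unfold sgx
    rw [dif_pos (by omega), dif_pos (by omega), this]
    split_ifs <;> norm_num
  · have := h.2 ⟨m, by omega⟩ rfl
    unfold sgx
    rw [dif_pos (by omega), dif_pos (by omega), this]
    cases y ⟨m, by omega⟩ <;> simp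

/-- multi-dimensional kernel -/
def KK {β : Type*} [Fintype β] {M : ℕ} (n : ℕ) (y c : β → Fin M → Bool) : ℝ :=
  ∏ i, KD n (fun k => sgx (c i) k * sgx (y i) k)

/-- exponents: given on `i ≠ i0`, filled up at `i0` to sum `b*q`. -/
def fillm {β : Type*} [Fintype β] [DecidableEq β] (i0 : β) (q : ℕ) (m : {i : β // i ≠ i0} → Fin (q+1)) (i : β) : ℕ :=
  if h : i = i0 then Fintype.card β * q - ∑ i', (m i' : ℕ) else m ⟨i, h⟩

lemma sum_fillm {β : Type*} [Fintype β] [DecidableEq β] (i0 : β) (q : ℕ)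
    (m : {i : β // i ≠ i0} → Fin (q+1)) : ∑ i, fillm i0 q m i = Fintype.card β * q := by
  rw [Fintype.sum_eq_add_sum_subtype_ne _ i0]
  have h1 : ∑ i : {i // i ≠ i0}, fillm i0 q m i = ∑ i', (m i' : ℕ) := by
    refine Finset.sum_congr rfl fun i _ => ?_
    unfold fillm; rw [dif_neg i.2]
  have h2 : fillm i0 q m i0 = Fintype.card β * q - ∑ i', (m i' : ℕ) := by
    unfold fillm; rw [dif_pos rfl]
  have h3 : ∑ i', (m i' : ℕ) ≤ Fintype.card β * q := by
    calc ∑ i', (m i' : ℕ) ≤ ∑ i' : {i // i ≠ i0}, q := Finset.sum_le_sum fun i _ => by omega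
      _ = Fintype.card {i // i ≠ i0} * q := by simp
      _ ≤ _ := Nat.mul_le_mul_right _ (Fintype.card_subtype_le _)
  rw [h1, h2]; omega

lemma fillm_le {β : Type*} [Fintype β] [DecidableEq β] (i0 : β) (q : ℕ)
    (m : {i : β // i ≠ i0} → Fin (q+1)) (i : β) : fillm i0 q m i ≤ Fintype.card β * q := by
  rw [← sum_fillm i0 q m]
  exact Finset.single_le_sum (f := fillm i0 q m) (fun _ _ => Nat.zero_le _) (Finset.mem_univ i)

lemma count_KK {β : Type*} [Fintype β] [DecidableEq β] [Nonempty β] {A q : ℕ}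
    (hA : Fintype.card β * q ≤ 2*A) (y : β → Fin (2*A+1) → Bool) :
    ((q+1)^(Fintype.card β - 1) : ℝ) * 2^((2*A+1) * Fintype.card β) / 2^(Fintype.card β * (q+1)) ≤
      ((Finset.univ.filter fun c : β → Fin (2*A+1) → Bool =>
        (2:ℝ)^(Fintype.card β * q) / 2^(Fintype.card β) ≤ |KK (pIdx A) y c|).card : ℝ) := by
  classical
  obtain ⟨i0⟩ := ‹Nonempty β›
  set b := Fintype.card β with hb
  let E : ({i : β // i ≠ i0} → Fin (q+1)) → Finset (β → Fin (2*A+1) → Bool) := fun m =>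
    Fintype.piFinset fun i => fdiff (y i) (fillm i0 q m i)
  have hlt : ∀ m i, fillm i0 q m i < 2*A+1 := fun m i => by
    have := fillm_le i0 q m i; rw [← hb] at this; omega
  have hdisj : Set.PairwiseDisjoint (↑(Finset.univ : Finset ({i : β // i ≠ i0} → Fin (q+1)))) E := by
    intro m _ m' _ hne
    rw [Function.onFun, Finset.disjoint_left]
    intro c hc hc'
    apply hne
    funext i
    rw [Fintype.mem_piFinset] at hc hc'
    have := fdiff_disj (hlt m i) (hlt m' i) (hc i) (hc' i)
    unfold fillm at this
    rw [dif_neg i.2, dif_neg i.2] at this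
    exact Fin.ext this
  have hcard : ∀ m, ((E m).card : ℝ) = 2^((2*A+1)*b) / 2^(b*(q+1)) := by
    intro m
    rw [Fintype.card_piFinset]
    have h1 : ∀ i, (fdiff (y i) (fillm i0 q m i)).card * (2^(fillm i0 q m i) * 2) = 2^(2*A+1) := by
      intro i
      rw [card_fdiff _ (hlt m i), ← pow_succ, ← pow_add]
      congr 1; have := hlt m i; omega
    have h2 : (∏ i, (fdiff (y i) (fillm i0 q m i)).card) * 2^(b*(q+1)) = 2^((2*A+1)*b) := by
      have h3 := Finset.prod_congr (s₁ := (Finset.univ : Finset β)) rfl fun i _ => h1 i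
      rw [Finset.prod_mul_distrib, Finset.prod_mul_distrib, Finset.prod_pow_eq_pow_sum, sum_fillm,
        Finset.prod_const, Finset.prod_const, Finset.card_univ, ← hb, ← pow_add, ← pow_mul] at h3
      rw [mul_add, mul_one, h3]
    rw [eq_div_iff (by positivity)]
    exact_mod_cast h2
  have hsub : Finset.univ.biUnion E ⊆ Finset.univ.filter fun c : β → Fin (2*A+1) → Bool =>
        (2:ℝ)^(b * q) / 2^b ≤ |KK (pIdx A) y c| := by
    intro c hc
    rw [Finset.mem_biUnion] at hc
    obtain ⟨m, _, hm⟩ := hc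
    rw [Fintype.mem_piFinset] at hm
    rw [Finset.mem_filter]
    refine ⟨Finset.mem_univ _, ?_⟩
    unfold KK
    rw [Finset.abs_prod]
    have : (2:ℝ)^(b * q) / 2^b = ∏ i, ((2:ℝ)^(fillm i0 q m i) / 2) := by
      rw [Finset.prod_div_distrib, Finset.prod_pow_eq_pow_sum, sum_fillm, Finset.prod_const,
        Finset.card_univ]
    rw [this]
    exact Finset.prod_le_prod (fun _ _ => by positivity) fun i _ =>
      KD_fdiff (by have := hlt m i; omega) (hm i)
  have hc := Finset.card_le_card hsub
  rw [Finset.card_biUnion hdisj] at hc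
  have hc' := (Nat.cast_le (α := ℝ)).2 hc
  rw [Nat.cast_sum] at hc'
  refine le_trans (le_of_eq ?_) hc'
  rw [Finset.sum_congr rfl fun m _ => hcard m, Finset.sum_const, Finset.card_univ, Fintype.card_fun,
    Fintype.card_fin]
  have : Fintype.card {i // i ≠ i0} = b - 1 := by rw [Fintype.card_subtype_compl]; simp [hb]
  rw [this]
  push_cast
  rw [nsmul_eq_mul]; push_cast; ring

/-- hitting lemma -/
lemma hitting {X C : Type*} [Fintype X] [Fintype C] [DecidableEq C] [Nonempty C] (P : X → C → Prop)
    [∀ x c, Decidable (P x c)]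
    (p : ℝ) (hP : ∀ x, p * Fintype.card C ≤ ((Finset.univ.filter fun c => P x c).card : ℝ)) (N : ℕ) :
    ∃ S : Finset C, S.card ≤ N ∧
      ((Finset.univ.filter fun x => ∀ c ∈ S, ¬ P x c).card : ℝ) ≤ (1 - p)^N * Fintype.card X := by
  classical
  have hC : (0:ℝ) < Fintype.card C := by exact_mod_cast Fintype.card_pos
  by_cases hX : Nonempty X
  swap
  · refine ⟨∅, by simp, ?_⟩
    have : IsEmpty X := not_nonempty_iff.1 hX
    simp
  have hp1 : p ≤ 1 := by
    obtain ⟨x⟩ := hX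
    have h1 := hP x
    have h2 : ((Finset.univ.filter fun c => P x c).card : ℝ) ≤ Fintype.card C := by
      exact_mod_cast Finset.card_le_univ _
    nlinarith
  induction N with
  | zero => exact ⟨∅, by simp, by simp⟩
  | succ N ih =>
    obtain ⟨S, hS, hU⟩ := ih
    set U := Finset.univ.filter fun x => ∀ c ∈ S, ¬ P x c with hUdef
    have hsum : p * Fintype.card C * U.card ≤ ∑ c, ((U.filter fun x => P x c).card : ℝ) := by
      have h1 : ∑ c, ((U.filter fun x => P x c).card : ℝ) =
          ∑ x ∈ U, ((Finset.univ.filter fun c => P x c).card : ℝ) := by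
        simp only [Finset.card_filter]
        push_cast
        rw [Finset.sum_comm]
      rw [h1]
      calc p * Fintype.card C * U.card = ∑ x ∈ U, p * Fintype.card C := by
            rw [Finset.sum_const, nsmul_eq_mul]; ring
        _ ≤ _ := Finset.sum_le_sum fun x _ => hP x
    have : ∃ c, p * U.card ≤ ((U.filter fun x => P x c).card : ℝ) := by
      by_contra hc
      push Not at hc
      have := Finset.sum_lt_sum_of_nonempty (s := (Finset.univ : Finset C)) Finset.univ_nonempty
        (fun c _ => hc c)
      rw [Finset.sum_const, Finset.card_univ, nsmul_eq_mul] at this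
      nlinarith
    obtain ⟨c, hc⟩ := this
    refine ⟨insert c S, (Finset.card_insert_le _ _).trans (by omega), ?_⟩
    have h1 : (Finset.univ.filter fun x => ∀ c' ∈ insert c S, ¬ P x c') = U.filter fun x => ¬ P x c := by
      ext x
      simp [hUdef, and_comm]
    rw [h1]
    have h2 : ((U.filter fun x => P x c).card : ℝ) + ((U.filter fun x => ¬ P x c).card : ℝ) = U.card := by
      exact_mod_cast Finset.card_filter_add_card_filter_not (s := U) (fun x => P x c)
    calc ((U.filter fun x => ¬ P x c).card : ℝ) ≤ (1 - p) * U.card := by linarith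
      _ ≤ (1-p) * ((1 - p)^N * Fintype.card X) := mul_le_mul_of_nonneg_left hU (by linarith)
      _ = _ := by ring

/-- sign lemma -/
lemma signs {X C : Type*} [Fintype C] [DecidableEq C] (K : X → C → ℝ) (S : Finset C)
    (V : Finset X) (lam : ℝ) (hV : ∀ x ∈ V, ∃ c ∈ S, lam ≤ |K x c|) :
    ∃ s : C → ℝ, (∀ c, s c = 1 ∨ s c = -1) ∧
      (V.card : ℝ) / 2 ≤ ((V.filter fun x => lam ≤ |∑ c ∈ S, s c * K x c|).card : ℝ) := by
  classical
  let sg : (C → Bool) → C → ℝ := fun e c => if e c then 1 else -1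
  have hx : ∀ x ∈ V, (Fintype.card (C → Bool) : ℝ) / 2 ≤
      ((Finset.univ.filter fun e : C → Bool => lam ≤ |∑ c ∈ S, sg e c * K x c|).card : ℝ) := by
    intro x hx
    obtain ⟨c0, hc0, hl⟩ := hV x hx
    set G := Finset.univ.filter fun e : C → Bool => lam ≤ |∑ c ∈ S, sg e c * K x c| with hG
    let fl : (C → Bool) → (C → Bool) := fun e => Function.update e c0 (!e c0)
    have hinj : Function.Injective fl := by
      have : Function.Involutive fl := by
        intro e; simp [fl]
      exact this.injective
    have hcov : (Finset.univ : Finset (C → Bool)) ⊆ G ∪ G.preimage fl hinj.injOn := by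
      intro e _
      rw [Finset.mem_union, Finset.mem_preimage, hG, Finset.mem_filter, Finset.mem_filter]
      by_contra hc
      simp only [Finset.mem_univ, true_and, not_or, not_le] at hc
      obtain ⟨h1, h2⟩ := hc
      rw [← Finset.add_sum_erase _ _ hc0] at h1 h2
      have h3 : ∑ c ∈ S.erase c0, sg (fl e) c * K x c = ∑ c ∈ S.erase c0, sg e c * K x c := by
        refine Finset.sum_congr rfl fun c hc => ?_
        have : c ≠ c0 := Finset.ne_of_mem_erase hc
        simp [sg, fl, Function.update_of_ne this]
      have h4 : sg (fl e) c0 = - sg e c0 := by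
        simp only [sg, fl, Function.update_self]
        cases e c0 <;> simp
      rw [h3, h4] at h2
      have h5 : |sg e c0 * K x c0| = |K x c0| := by
        rw [abs_mul]
        have : |sg e c0| = 1 := by simp only [sg]; split_ifs <;> simp
        rw [this, one_mul]
      rw [abs_lt] at h1 h2
      rw [← h5] at hl
      have : |sg e c0 * K x c0| < lam := by rw [abs_lt]; constructor <;> linarith [h1.1, h1.2, h2.1, h2.2]
      linarith
    have hc1 := (Finset.card_le_card hcov).trans (Finset.card_union_le _ _)
    have hc2 : (G.preimage fl hinj.injOn).card ≤ G.card := by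
      refine Finset.card_le_card_of_injOn fl ?_ hinj.injOn
      intro e he; simpa using he
    rw [Finset.card_univ] at hc1
    have : (Fintype.card (C → Bool) : ℝ) ≤ G.card + G.card := by exact_mod_cast hc1.trans (by omega)
    linarith
  have hsum : (Fintype.card (C → Bool) : ℝ) / 2 * V.card ≤
      ∑ e : C → Bool, ((V.filter fun x => lam ≤ |∑ c ∈ S, sg e c * K x c|).card : ℝ) := by
    have h1 : ∑ e : C → Bool, ((V.filter fun x => lam ≤ |∑ c ∈ S, sg e c * K x c|).card : ℝ) =
        ∑ x ∈ V, ((Finset.univ.filter fun e : C → Bool => lam ≤ |∑ c ∈ S, sg e c * K x c|).card : ℝ) := by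
      simp only [Finset.card_filter]
      push_cast
      rw [Finset.sum_comm]
    rw [h1]
    calc (Fintype.card (C → Bool) : ℝ) / 2 * V.card = ∑ x ∈ V, (Fintype.card (C → Bool) : ℝ) / 2 := by
          rw [Finset.sum_const, nsmul_eq_mul]; ring
      _ ≤ _ := Finset.sum_le_sum hx
  have : ∃ e, (V.card : ℝ) / 2 ≤ ((V.filter fun x => lam ≤ |∑ c ∈ S, sg e c * K x c|).card : ℝ) := by
    by_contra hc
    push Not at hc
    have := Finset.sum_lt_sum_of_nonempty (s := (Finset.univ : Finset (C → Bool))) Finset.univ_nonempty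
      (fun c _ => hc c)
    rw [Finset.sum_const, Finset.card_univ, nsmul_eq_mul] at this
    linarith
  obtain ⟨e, he⟩ := this
  exact ⟨sg e, fun c => by simp only [sg]; split_ifs <;> simp, he⟩

lemma logSum_tendsto : Tendsto logSum atTop atTop := by
  have h : Tendsto (fun n => ∑ i ∈ Finset.range n, (1:ℝ) / (i:ℝ)) atTop atTop :=
    (not_summable_iff_tendsto_nat_atTop_of_nonneg (fun i => by positivity)).1
      Real.not_summable_one_div_natCast
  refine h.congr fun n => ?_
  unfold logSum
  refine (Finset.sum_subset ?_ ?_).symm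
  · intro k hk; rw [Finset.mem_Icc] at hk; rw [Finset.mem_range]; omega
  · intro k hk hk'
    rw [Finset.mem_range] at hk; rw [Finset.mem_Icc] at hk'
    have : k = 0 := by omega
    rw [this]; simp

lemma logSum_ratio {a n : ℕ} (ha : 1 ≤ a) (hn : a ≤ n) :
    Tendsto (fun κ : ℕ => logSum (2^κ * a) / logSum (2^κ * n)) atTop (nhds 1) := by
  have hn1 : 1 ≤ n := ha.trans hn
  have hl : Tendsto (fun κ : ℕ => logSum (2^κ * n)) atTop atTop := by
    refine logSum_tendsto.comp (tendsto_atTop_mono (f := fun κ : ℕ => κ) (fun κ => ?_) tendsto_id)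
    calc κ ≤ 2^κ := Nat.lt_two_pow_self.le
      _ ≤ 2^κ * n := Nat.le_mul_of_pos_right _ hn1
  have hb : ∀ κ : ℕ, logSum (2^κ * n) - n ≤ logSum (2^κ * a) ∧ logSum (2^κ*a) ≤ logSum (2^κ * n) := by
    intro κ
    have hp : 1 ≤ 2^κ := Nat.one_le_two_pow
    have h1 : 1 ≤ 2^κ * a := Nat.mul_pos hp ha
    have h2 : 2^κ * a ≤ 2^κ * n := Nat.mul_le_mul_left _ hn
    have e : logSum (2^κ * n) = logSum (2^κ * a) + ∑ k ∈ Finset.Ico (2^κ*a) (2^κ*n), (1:ℝ)/k := by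
      unfold logSum
      have i1 : Finset.Icc 1 (2^κ*n-1) = Finset.Ico 1 (2^κ*n) := by ext; simp; omega
      have i2 : Finset.Icc 1 (2^κ*a-1) = Finset.Ico 1 (2^κ*a) := by ext; simp; omega
      rw [i1, i2, Finset.sum_Ico_consecutive _ h1 h2]
    have h3 : ∑ k ∈ Finset.Ico (2^κ*a) (2^κ*n), (1:ℝ)/k ≤ n := by
      calc ∑ k ∈ Finset.Ico (2^κ*a) (2^κ*n), (1:ℝ)/k
          ≤ ∑ k ∈ Finset.Ico (2^κ*a) (2^κ*n), (1:ℝ)/2^κ := by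
            refine Finset.sum_le_sum fun k hk => ?_
            have : 2^κ ≤ k := (Nat.le_mul_of_pos_right _ ha).trans (Finset.mem_Ico.1 hk).1
            refine one_div_le_one_div_of_le (by positivity) ?_
            exact_mod_cast this
        _ = (2^κ*n - 2^κ*a : ℕ) * ((1:ℝ)/2^κ) := by simp
        _ ≤ (2^κ*n : ℕ) * ((1:ℝ)/2^κ) := by
            refine mul_le_mul_of_nonneg_right ?_ (by positivity)
            exact_mod_cast Nat.sub_le _ _
        _ = n := by push_cast; field_simp
    have h4 : 0 ≤ ∑ k ∈ Finset.Ico (2^κ*a) (2^κ*n), (1:ℝ)/k := Finset.sum_nonneg fun _ _ => by positivity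
    constructor <;> linarith
  have h0 : Tendsto (fun κ : ℕ => 1 - (n:ℝ) / logSum (2^κ * n)) atTop (nhds 1) := by
    simpa using (tendsto_const_nhds (x := (1:ℝ))).sub (hl.const_div_atTop (n:ℝ))
  refine tendsto_of_tendsto_of_tendsto_of_le_of_le' h0 tendsto_const_nhds ?_ ?_
  · filter_upwards [hl.eventually_gt_atTop 0] with κ hκ
    rw [le_div_iff₀ hκ, sub_mul, div_mul_cancel₀ _ hκ.ne']
    linarith [(hb κ).1]
  · filter_upwards [hl.eventually_gt_atTop 0] with κ hκ
    rw [div_le_one hκ]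
    exact (hb κ).2

lemma signed_set {β : Type*} [Fintype β] [DecidableEq β] [Nonempty β] {A q N : ℕ}
    (hA : Fintype.card β * q ≤ 2*A)
    (hN : (2:ℝ)^(Fintype.card β * (q+1)) ≤ (q+1)^(Fintype.card β - 1) * N) :
    ∃ (S : Finset (β → Fin (2*A+1) → Bool)) (s : (β → Fin (2*A+1) → Bool) → ℝ),
      S.card ≤ N ∧ (∀ c ∈ S, |s c| = 1) ∧ (∀ c ∉ S, s c = 0) ∧
      ∃ G : Finset (β → Fin (2*A+1) → Bool), (2:ℝ)^((2*A+1) * Fintype.card β) / 4 ≤ G.card ∧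
        ∀ y ∈ G, (2:ℝ)^(Fintype.card β * q) / 2^(Fintype.card β) ≤ |∑ c, s c * KK (pIdx A) y c| := by
  classical
  set b := Fintype.card β with hb
  have hC : (Fintype.card (β → Fin (2*A+1) → Bool) : ℝ) = 2^((2*A+1)*b) := by
    simp [Fintype.card_fun, ← hb, pow_mul]
  set p : ℝ := (q+1)^(b-1) / 2^(b*(q+1)) with hp
  set lam : ℝ := (2:ℝ)^(b * q) / 2^b with hlam
  obtain ⟨S, hS, hU⟩ := hitting (X := β → Fin (2*A+1) → Bool)
    (fun y c => lam ≤ |KK (pIdx A) y c|) p (by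
      intro y
      refine le_trans (le_of_eq ?_) (count_KK hA y)
      rw [hC, hp, ← hb]; ring) N
  set V := Finset.univ.filter fun y : β → Fin (2*A+1) → Bool => ¬ ∀ c ∈ S, ¬ lam ≤ |KK (pIdx A) y c| with hVdef
  obtain ⟨s, hs, hs2⟩ := signs (fun y c => KK (pIdx A) y c) S V lam (by
    intro x hx
    rw [hVdef, Finset.mem_filter] at hx
    have := hx.2
    push Not at this
    exact this)
  have hVc : (2:ℝ)^((2*A+1)*b) / 2 ≤ V.card := by
    have h1 : ((Finset.univ.filter fun y : β → Fin (2*A+1) → Bool => ∀ c ∈ S, ¬ lam ≤ |KK (pIdx A) y c|).card : ℝ)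
        + V.card = 2^((2*A+1)*b) := by
      rw [← hC, ← Finset.card_univ]
      exact_mod_cast Finset.card_filter_add_card_filter_not (s := Finset.univ) _
    have hp0 : 0 ≤ p := by positivity
    have hp1 : p ≤ 1 := by
      rw [hp, div_le_one (by positivity)]
      have h3 : ((q+1 : ℕ):ℝ) ≤ ((2^(q+1) : ℕ):ℝ) := by exact_mod_cast Nat.lt_two_pow_self.le
      push_cast at h3
      calc ((q:ℝ)+1)^(b-1) ≤ ((q:ℝ)+1)^b := pow_le_pow_right₀ (by linarith [(Nat.cast_nonneg q : (0:ℝ) ≤ q)]) (by omega)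
        _ ≤ (2^(q+1))^b := pow_le_pow_left₀ (by positivity) h3 _
        _ = _ := by rw [← pow_mul, mul_comm]
    have h2 : (1-p)^N ≤ 1/2 := by
      have e1 : (1-p)^N ≤ Real.exp (-p)^N :=
        pow_le_pow_left₀ (by linarith) (by linarith [Real.add_one_le_exp (-p)]) _
      have e2 : Real.exp (-p)^N = Real.exp (-(N*p)) := by rw [← Real.exp_nat_mul]; ring_nf
      have e3 : 1 ≤ N * p := by
        rw [hp, ← mul_div_assoc, le_div_iff₀ (by positivity)]; linarith
      have e4 : Real.exp (-(N*p)) ≤ Real.exp (-1) := Real.exp_le_exp.2 (by linarith)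
      have e5 : Real.exp (-1) ≤ 1/2 := by
        rw [Real.exp_neg, ← one_div]
        exact one_div_le_one_div_of_le (by norm_num) (by linarith [Real.add_one_le_exp 1])
      linarith
    rw [hC] at hU
    have h5 : (1-p)^N * 2^((2*A+1)*b) ≤ 1/2 * 2^((2*A+1)*b) := mul_le_mul_of_nonneg_right h2 (by positivity)
    linarith
  refine ⟨S, fun c => if c ∈ S then s c else 0, hS, ?_, ?_, V.filter fun x => lam ≤ |∑ c ∈ S, s c * KK (pIdx A) x c|, ?_, ?_⟩
  · intro c hc
    simp only [if_pos hc]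
    rcases hs c with h | h <;> rw [h] <;> simp
  · intro c hc; simp only [if_neg hc]
  · linarith
  · intro y hy
    have := (Finset.mem_filter.1 hy).2
    simpa [ite_mul, Finset.sum_ite_mem] using this

lemma bad_function {d : ℕ} (B : Finset (Fin d)) (hB : 1 < B.card) (Q : YoungFunction) {A q N : ℕ} {h R : ℝ}
    (hh : 0 < h)
    (hA : B.card * q ≤ 2*A)
    (hN : (2:ℝ)^(B.card * (q+1)) ≤ (q+1)^(B.card - 1) * N)
    (hQ : Q.toFun h * N ≤ 2^((2*A+1) * B.card))
    (hR : R + 1 ≤ h * (1/2)^((2*A+1)*B.card) * ((2:ℝ)^(B.card * q) / 2^B.card)) (k : ℕ) :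
    ∃ ξ : (Fin d → ℝ) → ℝ, Measurable ξ ∧ 1 ∈ orliczSet Q ξ ∧ ∃ n ≥ k,
      1/8 < (cubeMeasure d).real {x | R ≤ |mixedLogMean B ξ (fun _ => n) x|} := by
  classical
  have hne : Nonempty B := by
    have : B.Nonempty := Finset.card_pos.1 (by omega)
    exact this.to_subtype
  have hcB : Fintype.card B = B.card := Fintype.card_coe B
  obtain ⟨S, s, hS, hs1, hs0, G, hG, hGy⟩ := signed_set (β := B) (A := A) (q := q) (N := N)
    (by rw [hcB]; exact hA) (by rw [hcB]; exact hN)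
  rw [hcB] at hG hGy
  set n' := pIdx A with hn'
  have hn'1 : 1 ≤ n' := Nat.one_le_two_pow.trans (pIdx_ge A)
  have hnM : n' ≤ 2^(2*A+1) := (pIdx_lt A).le
  let F : (B → Fin (2*A+1) → Bool) → ℝ := fun c => h * s c
  let Φ : ℕ → (B → Fin (2*A+1) → Bool) → ℝ := fun κ y =>
    ∑ c, F c * ∏ i : B, ((1/2)^(2*A+1) * ∑ j ∈ Finset.range n',
        Wal j (fun k => sgx (c i) k * sgx (y i) k) *
          (logSum (2^κ * (n' - j)) / logSum (2^κ * n')))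
  have hlim : ∀ y, Tendsto (fun κ => Φ κ y) atTop (nhds (∑ c, F c * ∏ i : B, ((1/2)^(2*A+1) * ∑ j ∈ Finset.range n',
        Wal j (fun k => sgx (c i) k * sgx (y i) k) * 1))) := by
    intro y
    refine tendsto_finsetSum _ fun c _ => Tendsto.const_mul _ ?_
    refine tendsto_finsetProd _ fun i _ => Tendsto.const_mul _ ?_
    refine tendsto_finsetSum _ fun j hj => Tendsto.const_mul _ ?_
    rw [Finset.mem_range] at hj
    exact logSum_ratio (by omega) (by omega)
  have hval : ∀ y, (∑ c, F c * ∏ i : B, ((1/2)^(2*A+1) * ∑ j ∈ Finset.range n',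
        Wal j (fun k => sgx (c i) k * sgx (y i) k) * 1)) =
        h * (1/2)^((2*A+1)*B.card) * ∑ c, s c * KK n' y c := by
    intro y
    rw [Finset.mul_sum]
    refine Finset.sum_congr rfl fun c _ => ?_
    rw [Finset.prod_mul_distrib, Finset.prod_const, Finset.card_univ, hcB, ← pow_mul]
    simp only [mul_one, F, KK, KD]
    ring
  have hbig : ∀ y ∈ G, ∀ᶠ κ in atTop, R ≤ |Φ κ y| := by
    intro y hy
    have h1 := hlim y
    rw [hval y] at h1
    have h2 : R + 1 ≤ |h * (1/2)^((2*A+1)*B.card) * ∑ c, s c * KK n' y c| := by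
      rw [abs_mul, abs_of_nonneg (by positivity)]
      exact hR.trans (mul_le_mul_of_nonneg_left (hGy y hy) (by positivity))
    have := h1.abs.eventually_const_lt (u := R) (by linarith)
    exact this.mono fun _ h => le_of_lt h
  have hall : ∀ᶠ κ in atTop, ∀ y ∈ G, R ≤ |Φ κ y| := (Filter.eventually_all_finset G).2 hbig
  obtain ⟨κ, hκ1, hκ2⟩ := (hall.and (eventually_ge_atTop (k+1))).exists
  have hκ3 : κ < 2^κ := Nat.lt_two_pow_self
  have hκ4 : 2^κ ≤ 2^κ * n' := Nat.le_mul_of_pos_right _ hn'1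
  refine ⟨fun x => F (digB B κ (2*A+1) x), (measurable_of_finite F).comp (measurable_digB B κ (2*A+1)),
    ⟨one_pos, ?_, ?_⟩, 2^κ * n', by omega, ?_⟩
  · exact integrable_digB B κ (2*A+1) (fun c => Q.toFun (|F c| / 1))
  · rw [integral_digB B κ (2*A+1) (fun c => Q.toFun (|F c| / 1))]
    have h1 : ∑ c, Q.toFun (|F c| / 1) = S.card * Q.toFun h := by
      rw [← Finset.sum_subset (Finset.subset_univ S)]
      · rw [Finset.sum_congr rfl (g := fun _ => Q.toFun h)]
        · simp
        · intro c hc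
          simp only [F]
          rw [abs_mul, hs1 c hc, abs_of_pos hh]; simp
      · intro c _ hc
        simp only [F]
        rw [hs0 c hc]; simp [Q.map_zero]
    rw [h1, one_div, inv_pow, inv_mul_le_iff₀ (by positivity), mul_one]
    refine le_trans ?_ hQ
    rw [mul_comm]
    refine mul_le_mul_of_nonneg_left ?_ (Q.nonneg h)
    exact_mod_cast hS
  · have h1 : {x | digB B κ (2*A+1) x ∈ G} ⊆
        {x | R ≤ |mixedLogMean B (fun x => F (digB B κ (2*A+1) x)) (fun _ => 2^κ * n') x|} := by
      intro x hx
      rw [Set.mem_ofPred_eq, mean_digB B κ (2*A+1) n' F hnM (by omega)]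
      exact hκ1 _ hx
    refine lt_of_lt_of_le ?_ (measureReal_mono h1)
    rw [measure_digB]
    have : ((1:ℝ)/2)^((2*A+1)*B.card) * (2^((2*A+1)*B.card)/4) ≤ (1/2)^((2*A+1)*B.card) * G.card :=
      mul_le_mul_of_nonneg_left hG (by positivity)
    refine lt_of_lt_of_le ?_ this
    have e : ((1:ℝ)/2)^((2*A+1)*B.card) * (2^((2*A+1)*B.card)/4) = 1/4 := by
      rw [mul_div_assoc', ← mul_pow]; norm_num
    rw [e]; norm_num

lemma log_bound {b Q1 : ℕ} (hb : 1 ≤ b) (hQ1 : 1 ≤ Q1) {h : ℝ} (h0 : 0 ≤ h) (hh : h < 2^(b^2*Q1)) :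
    Real.log (1 + h) ≤ 2 * b^2 * Q1 := by
  have h1 : 1 + h ≤ 2^(2 * b^2*Q1) := by
    have e : (2:ℝ)^(2*b^2*Q1) = 2^(b^2*Q1) * 2^(b^2*Q1) := by rw [← pow_add]; congr 1; ring
    have e2 : (2:ℝ) ≤ 2^(b^2*Q1) := by
      conv_lhs => rw [← pow_one (2:ℝ)]
      exact pow_le_pow_right₀ (by norm_num) (Nat.mul_pos (by positivity) hQ1)
    rw [e]; nlinarith
  calc Real.log (1+h) ≤ Real.log (2^(2*b^2*Q1)) := Real.log_le_log (by linarith) h1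
    _ = (2*b^2*Q1 : ℕ) * Real.log 2 := by rw [Real.log_pow]
    _ ≤ (2*b^2*Q1 : ℕ) * 1 := mul_le_mul_of_nonneg_left (by linarith [Real.log_two_lt_d9]) (by positivity)
    _ = _ := by push_cast; ring

lemma exists_bad {d : ℕ} (B : Finset (Fin d)) (hB : 1 < B.card) (Q : YoungFunction)
    (hQ : ∀ ε > 0, ∀ H : ℝ, ∃ h ≥ H, Q.toFun h ≤ ε * (h * Real.log (1 + h)^(B.card - 1)))
    (R : ℝ) (hR : 0 ≤ R) (k : ℕ) :
    ∃ ξ : (Fin d → ℝ) → ℝ, Measurable ξ ∧ 1 ∈ orliczSet Q ξ ∧ ∃ n ≥ k,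
      1/8 < (cubeMeasure d).real {x | R ≤ |mixedLogMean B ξ (fun _ => n) x|} := by
  set b := B.card with hb
  obtain ⟨H, hH⟩ := eventually_atTop.1 (Q.tendsto_atTop.eventually_ge_atTop 1)
  set D : ℝ := 2 * 16^b * (2*b^2)^(b-1) * (R+1) with hD
  have hb0 : (0:ℝ) < b := by exact_mod_cast (by omega : 0 < b)
  have hDpos : 0 < D := by positivity
  obtain ⟨h, hh, hQh⟩ := hQ (1/D) (by positivity) (max H (2^(b^2)))
  have hhH : H ≤ h := (le_max_left _ _).trans hh
  have hh2 : (2:ℝ)^(b^2) ≤ h := (le_max_right _ _).trans hh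
  have hhpos : 0 < h := lt_of_lt_of_le (by positivity) hh2
  have hQge : h ≤ Q.toFun h := by
    have := hH h hhH
    rwa [le_div_iff₀ hhpos, one_mul] at this
  have hQpos : 0 < Q.toFun h := lt_of_lt_of_le hhpos hQge
  -- choose q
  obtain ⟨q, hq1, hq2⟩ : ∃ q : ℕ, (2:ℝ)^(b^2*q) ≤ h ∧ h < 2^(b^2*(q+1)) := by
    have hone : (1:ℝ) ≤ h := le_trans (one_le_pow₀ (by norm_num)) hh2
    obtain ⟨q, h1, h2⟩ := exists_nat_pow_near hone (y := (2:ℝ)^(b^2)) (one_lt_pow₀ (by norm_num) (by positivity))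
    exact ⟨q, by rwa [pow_mul], by rwa [pow_mul]⟩
  have hqpos : 1 ≤ q := by
    by_contra hc
    have : q = 0 := by omega
    subst this
    simp at hq2
    linarith
  have hq0 : (0:ℝ) < (q:ℝ)+1 := by positivity
  -- choose A minimal
  let P : ℕ → Prop := fun A => 2 * Q.toFun h * 2^(b*(q+1)) ≤ 2^((2*A+1)*b) * ((q:ℝ)+1)^(b-1)
  have hex : ∃ A, P A := by
    obtain ⟨A, hA⟩ := pow_unbounded_of_one_lt (2 * Q.toFun h * 2^(b*(q+1))) (by norm_num : (1:ℝ) < 2)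
    refine ⟨A, hA.le.trans ?_⟩
    have h1 : (2:ℝ)^A ≤ 2^((2*A+1)*b) := pow_le_pow_right₀ (by norm_num) (by nlinarith)
    have h2 : (1:ℝ) ≤ ((q:ℝ)+1)^(b-1) := one_le_pow₀ (by linarith [(Nat.cast_nonneg q : (0:ℝ) ≤ q)])
    calc (2:ℝ)^A ≤ 2^((2*A+1)*b) := h1
      _ ≤ _ := le_mul_of_one_le_right (by positivity) h2
  classical
  set A := Nat.find hex with hAdef
  have hPA : 2 * Q.toFun h * 2^(b*(q+1)) ≤ 2^((2*A+1)*b) * ((q:ℝ)+1)^(b-1) := Nat.find_spec hex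
  have hle2 : ((q:ℝ)+1)^(b-1) ≤ 2^(b*(q+1)) := by
    have h3 : ((q+1 : ℕ):ℝ) ≤ ((2^(q+1) : ℕ):ℝ) := by exact_mod_cast Nat.lt_two_pow_self.le
    push_cast at h3
    calc ((q:ℝ)+1)^(b-1) ≤ ((q:ℝ)+1)^b := pow_le_pow_right₀ (by linarith [(Nat.cast_nonneg q : (0:ℝ) ≤ q)]) (by omega)
      _ ≤ (2^(q+1))^b := pow_le_pow_left₀ (by positivity) h3 _
      _ = _ := by rw [← pow_mul, mul_comm]
  have hA : b * q ≤ 2*A := by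
    by_contra hc
    have h1 : (2:ℝ)^((2*A+1)*b) ≤ 2^(b^2*q) := pow_le_pow_right₀ (by norm_num) (by nlinarith)
    have h2 : (2:ℝ)^((2*A+1)*b) ≤ Q.toFun h := h1.trans (hq1.trans hQge)
    have h3 : (2:ℝ)^((2*A+1)*b) * ((q:ℝ)+1)^(b-1) ≤ Q.toFun h * 2^(b*(q+1)) :=
      mul_le_mul h2 hle2 (by positivity) hQpos.le
    have : 0 < Q.toFun h * 2^(b*(q+1)) := by positivity
    linarith
  have hA1 : 1 ≤ A := by
    have : 1 ≤ b * q := Nat.mul_pos (by omega) hqpos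
    omega
  have hPA' : 2^((2*(A-1)+1)*b) * ((q:ℝ)+1)^(b-1) < 2 * Q.toFun h * 2^(b*(q+1)) := by
    have := Nat.find_min hex (m := A - 1) (by omega)
    exact not_le.1 this
  set t : ℝ := 2^(b*(q+1)) / ((q:ℝ)+1)^(b-1) with ht
  have ht1 : 1 ≤ t := by rw [ht, one_le_div (by positivity)]; exact hle2
  refine bad_function B hB Q (A := A) (q := q) (N := ⌈t⌉₊) hhpos hA ?_ ?_ ?_ k
  · have := Nat.le_ceil t
    calc (2:ℝ)^(b*(q+1)) = ((q:ℝ)+1)^(b-1) * t := by rw [ht]; field_simp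
      _ ≤ _ := mul_le_mul_of_nonneg_left this (by positivity)
  · have h1 : (⌈t⌉₊ : ℝ) ≤ 2 * t := by linarith [Nat.ceil_lt_add_one (by linarith : 0 ≤ t)]
    calc Q.toFun h * ⌈t⌉₊ ≤ Q.toFun h * (2*t) := mul_le_mul_of_nonneg_left h1 hQpos.le
      _ = (2 * Q.toFun h * 2^(b*(q+1))) / ((q:ℝ)+1)^(b-1) := by rw [ht]; ring
      _ ≤ _ := by rw [div_le_iff₀ (by positivity)]; exact hPA
  · -- lower bound
    have hlog := log_bound (b := b) (Q1 := q+1) (by omega) (by omega) hhpos.le hq2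
    have hlog0 : 0 ≤ Real.log (1+h) := Real.log_nonneg (by linarith)
    have h1 : Real.log (1+h)^(b-1) ≤ (2*b^2)^(b-1) * ((q:ℝ)+1)^(b-1) := by
      rw [← mul_pow]
      refine pow_le_pow_left₀ hlog0 ?_ _
      push_cast at hlog; exact hlog
    have h2 : D * Q.toFun h ≤ h * ((2*b^2)^(b-1) * ((q:ℝ)+1)^(b-1)) := by
      have h3 : D * Q.toFun h ≤ h * Real.log (1+h)^(b-1) := by
        have := mul_le_mul_of_nonneg_left hQh hDpos.le
        rwa [← mul_assoc, mul_one_div_cancel hDpos.ne', one_mul] at this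
      exact h3.trans (mul_le_mul_of_nonneg_left h1 hhpos.le)
    have h4 : 2 * 16^b * (R+1) * Q.toFun h ≤ h * ((q:ℝ)+1)^(b-1) := by
      have hpos : (0:ℝ) < (2*b^2)^(b-1) := by positivity
      refine le_of_mul_le_mul_left ?_ hpos
      rw [hD] at h2
      linarith
    have e1 : (2:ℝ)^((2*A+1)*b) = 4^b * 2^((2*(A-1)+1)*b) := by
      have : (4:ℝ)^b = 2^(2*b) := by rw [pow_mul]; norm_num
      rw [this, ← pow_add]; congr 1
      obtain ⟨A', hA'⟩ : ∃ A', A = A' + 1 := ⟨A - 1, by omega⟩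
      rw [hA']; simp; ring
    have e2 : (2:ℝ)^(b*(q+1)) = 2^(b*q) * 2^b := by rw [← pow_add]; congr 1
    have e3 : (16:ℝ)^b = 4^b * (2^b * 2^b) := by
      rw [← mul_pow, ← mul_pow]; norm_num
    set Z : ℝ := 2^((2*(A-1)+1)*b) with hZ
    have hZpos : 0 < Z := by positivity
    rw [one_div, inv_pow, e1, ← div_eq_mul_inv, div_mul_div_comm, le_div_iff₀ (by positivity)]
    -- (R+1) * (4^b * Z * 2^b) ≤ h * 2^(b q)
    have h5 : (R+1) * (4^b * Z * 2^b) * ((q:ℝ)+1)^(b-1) ≤ (R+1) * (4^b * 2^b) * (2 * Q.toFun h * 2^(b*(q+1))) := by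
      have := mul_le_mul_of_nonneg_left hPA'.le (by positivity : 0 ≤ (R+1) * (4^b * 2^b))
      linarith
    have h6 : (R+1) * (4^b * 2^b) * (2 * Q.toFun h * 2^(b*(q+1))) = (2 * 16^b * (R+1) * Q.toFun h) * 2^(b*q) := by
      rw [e2, e3]; ring
    have h7 := mul_le_mul_of_nonneg_right h4 (by positivity : (0:ℝ) ≤ 2^(b*q))
    refine le_of_mul_le_mul_right ?_ (by positivity : (0:ℝ) < ((q:ℝ)+1)^(b-1))
    linarith

lemma YoungFunction.mono (Q : YoungFunction) {a b : ℝ} (ha : 0 ≤ a) (hab : a ≤ b) :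
    Q.toFun a ≤ Q.toFun b := by
  rcases eq_or_lt_of_le (ha.trans hab) with hb | hb
  · have : a = b := le_antisymm hab (by rw [← hb]; exact ha)
    rw [this]
  have h1 : a / b ≤ 1 := (div_le_one hb).2 hab
  have h0 : 0 ≤ a / b := div_nonneg ha hb.le
  have := Q.convexOn.2 (Set.mem_univ b) (Set.mem_univ 0) h0 (by linarith : 0 ≤ 1 - a / b) (by ring)
  simp only [smul_eq_mul, mul_zero, add_zero, Q.map_zero] at this
  rw [div_mul_cancel₀ _ hb.ne'] at this
  exact this.trans (mul_le_of_le_one_left (Q.nonneg b) h1)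

lemma orliczSet_add {d : ℕ} {Q : YoungFunction} {f g : (Fin d → ℝ) → ℝ} (hf : Measurable f)
    (hg : Measurable g) {a b : ℝ} (ha : a ∈ orliczSet Q f) (hb : b ∈ orliczSet Q g) :
    a + b ∈ orliczSet Q (fun x => f x + g x) := by
  obtain ⟨ha0, hai, ha1⟩ := ha
  obtain ⟨hb0, hbi, hb1⟩ := hb
  have hab : 0 < a + b := by linarith
  have key : ∀ x, Q.toFun (|f x + g x| / (a+b)) ≤
      a/(a+b) * Q.toFun (|f x| / a) + b/(a+b) * Q.toFun (|g x| / b) := by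
    intro x
    have h1 : |f x + g x| / (a+b) ≤ a/(a+b) * (|f x| / a) + b/(a+b) * (|g x| / b) := by
      have : a/(a+b) * (|f x| / a) + b/(a+b) * (|g x| / b) = (|f x| + |g x|) / (a+b) := by
        field_simp
      rw [this]
      exact div_le_div_of_nonneg_right (abs_add_le _ _) hab.le
    refine (Q.mono (by positivity) h1).trans ?_
    exact Q.convexOn.2 (Set.mem_univ _) (Set.mem_univ _) (by positivity) (by positivity)
      (by field_simp)
  have hi : Integrable (fun x => a/(a+b) * Q.toFun (|f x| / a) + b/(a+b) * Q.toFun (|g x| / b))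
      (cubeMeasure d) := (hai.const_mul _).add (hbi.const_mul _)
  have hm : Measurable fun x => Q.toFun (|f x + g x| / (a+b)) :=
    Q.continuous.measurable.comp ((hf.add hg).abs.div_const _)
  have hi' : Integrable (fun x => Q.toFun (|f x + g x| / (a+b))) (cubeMeasure d) := by
    refine hi.mono' hm.aestronglyMeasurable (ae_of_all _ fun x => ?_)
    rw [Real.norm_of_nonneg (Q.nonneg _)]
    exact key x
  refine ⟨hab, hi', (integral_mono hi' hi key).trans ?_⟩
  rw [integral_add (hai.const_mul _) (hbi.const_mul _), integral_const_mul, integral_const_mul]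
  calc _ ≤ a/(a+b) * 1 + b/(a+b) * 1 := by gcongr
    _ = 1 := by field_simp

lemma orliczSet_mul {d : ℕ} {Q : YoungFunction} {f : (Fin d → ℝ) → ℝ} {c k : ℝ} (hc : 0 < |c|)
    (hk : k ∈ orliczSet Q f) : |c| * k ∈ orliczSet Q (fun x => c * f x) := by
  obtain ⟨h0, h1, h2⟩ := hk
  have e : ∀ x, |c * f x| / (|c| * k) = |f x| / k := by
    intro x; rw [abs_mul, mul_div_mul_left _ _ hc.ne']
  refine ⟨by positivity, ?_, ?_⟩
  · simpa only [e] using h1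
  · simpa only [e] using h2

lemma MemOrlicz.sub {d : ℕ} {Q : YoungFunction} {f g : (Fin d → ℝ) → ℝ} (hf : MemOrlicz Q f)
    (hg : MemOrlicz Q g) : MemOrlicz Q (f - g) := by
  obtain ⟨hfm, a, ha⟩ := hf
  obtain ⟨hgm, b, hb⟩ := hg
  refine ⟨hfm.sub hgm, a + |(-1:ℝ)| * b, ?_⟩
  have := orliczSet_add hfm (hgm.const_mul (-1)) ha (orliczSet_mul (c := -1) (by simp) hb)
  have e : f - g = fun x => f x + -1 * g x := by funext x; simp [sub_eq_add_neg]
  rw [e]; exact this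

lemma orliczNorm_lt {d : ℕ} {Q : YoungFunction} {f : (Fin d → ℝ) → ℝ} (hf : MemOrlicz Q f) {δ : ℝ}
    (h : orliczNorm Q f < δ) : ∃ k ∈ orliczSet Q f, k < δ :=
  exists_lt_of_csInf_lt hf.2 h

lemma orliczNorm_le {d : ℕ} {Q : YoungFunction} {f : (Fin d → ℝ) → ℝ} {k : ℝ}
    (h : k ∈ orliczSet Q f) : orliczNorm Q f ≤ k :=
  csInf_le ⟨0, fun _ hx => hx.1.le⟩ h

lemma orlicz_int {d : ℕ} {Q : YoungFunction} {u0 : ℝ} (hu0 : 0 ≤ u0)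
    (hu : ∀ u, u0 ≤ u → u ≤ Q.toFun u) {f : (Fin d → ℝ) → ℝ}
    (hf : Measurable f) {k : ℝ} (hk : k ∈ orliczSet Q f) :
    Integrable f (cubeMeasure d) ∧ ∫ x, |f x| ∂(cubeMeasure d) ≤ (u0 + 1) * k := by
  obtain ⟨h0, h1, h2⟩ := hk
  have key : ∀ x, |f x| ≤ k * (u0 + Q.toFun (|f x| / k)) := by
    intro x
    have : |f x| / k ≤ u0 + Q.toFun (|f x| / k) := by
      rcases le_total u0 (|f x| / k) with h | h
      · linarith [hu _ h]
      · linarith [Q.nonneg (|f x| / k)]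
    rwa [div_le_iff₀' h0] at this
  have hi : Integrable (fun x => k * (u0 + Q.toFun (|f x| / k))) (cubeMeasure d) :=
    ((integrable_const _).add h1).const_mul _
  have hfi : Integrable f (cubeMeasure d) :=
    hi.mono' hf.aestronglyMeasurable (ae_of_all _ key)
  refine ⟨hfi, (integral_mono hfi.abs hi key).trans ?_⟩
  rw [integral_const_mul, integral_add (integrable_const _) h1]
  simp only [integral_const, probReal_univ, one_smul]
  nlinarith

lemma abs_prod_walsh {d : ℕ} (j : Fin d → ℕ) (x : Fin d → ℝ) : |∏ i, walsh (j i) (x i)| = 1 := by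
  rw [Finset.abs_prod]
  exact Finset.prod_eq_one fun i _ => abs_walsh _ _

lemma integrable_mul_walsh {d : ℕ} {f : (Fin d → ℝ) → ℝ} (hf : Integrable f (cubeMeasure d))
    (j : Fin d → ℕ) : Integrable (fun x => f x * ∏ i, walsh (j i) (x i)) (cubeMeasure d) := by
  refine hf.abs.mono' (hf.aestronglyMeasurable.mul ?_) (ae_of_all _ fun x => ?_)
  · refine Measurable.aestronglyMeasurable ?_
    exact Finset.measurable_fun_prod _ fun i _ => (measurable_walsh _).comp (measurable_pi_apply i)
  · rw [Real.norm_eq_abs, abs_mul, abs_prod_walsh, mul_one]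

lemma walshCoef_lin {d : ℕ} {f g : (Fin d → ℝ) → ℝ} (hf : Integrable f (cubeMeasure d))
    (hg : Integrable g (cubeMeasure d)) (c : ℝ) (j : Fin d → ℕ) :
    walshCoef (fun x => f x + c * g x) j = walshCoef f j + c * walshCoef g j := by
  unfold walshCoef
  rw [← integral_const_mul, ← integral_add (integrable_mul_walsh hf j)
    ((integrable_mul_walsh hg j).const_mul c)]
  congr 1; funext x; ring

lemma mixedLogMean_lin {d : ℕ} (B : Finset (Fin d)) {f g : (Fin d → ℝ) → ℝ}
    (hf : Integrable f (cubeMeasure d))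
    (hg : Integrable g (cubeMeasure d)) (c : ℝ) (n : Fin d → ℕ) (x : Fin d → ℝ) :
    mixedLogMean B (fun x => f x + c * g x) n x = mixedLogMean B f n x + c * mixedLogMean B g n x := by
  have h1 : ∀ N, rectPartialSum (fun x => f x + c * g x) N x =
      rectPartialSum f N x + c * rectPartialSum g N x := by
    intro N
    unfold rectPartialSum
    rw [Finset.mul_sum, ← Finset.sum_add_distrib]
    refine Finset.sum_congr rfl fun j _ => ?_
    rw [walshCoef_lin hf hg]; ring
  unfold mixedLogMean
  rw [mul_left_comm, ← mul_add]
  congr 1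
  rw [Finset.mul_sum, ← Finset.sum_add_distrib]
  refine Finset.sum_congr rfl fun j _ => ?_
  rw [h1]; ring

lemma mixedLogMean_bound {d : ℕ} (B : Finset (Fin d)) (n : Fin d → ℕ) :
    ∃ C : ℝ, 0 ≤ C ∧ ∀ f : (Fin d → ℝ) → ℝ, ∀ x,
      |mixedLogMean B f n x| ≤ C * ∫ x, |f x| ∂(cubeMeasure d) := by
  have hc : ∀ (f : (Fin d → ℝ) → ℝ) j, |walshCoef f j| ≤ ∫ x, |f x| ∂(cubeMeasure d) := by
    intro f j
    unfold walshCoef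
    refine (abs_integral_le_integral_abs).trans (le_of_eq ?_)
    congr 1; funext x
    rw [abs_mul, abs_prod_walsh, mul_one]
  have hr : ∀ (f : (Fin d → ℝ) → ℝ) N x, |rectPartialSum f N x| ≤
      (Fintype.piFinset (fun i => Finset.range (N i))).card * ∫ x, |f x| ∂(cubeMeasure d) := by
    intro f N x
    unfold rectPartialSum
    refine (Finset.abs_sum_le_sum_abs _ _).trans ?_
    rw [← nsmul_eq_mul]
    refine Finset.sum_le_card_nsmul _ _ _ fun j _ => ?_
    rw [abs_mul, abs_prod_walsh, mul_one]
    exact hc f j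
  refine ⟨|(∏ j, logSum (n j))⁻¹| * ∑ i ∈ Fintype.piFinset (fun j => Finset.Ico 1 (n j)),
      ((Fintype.piFinset (fun j => Finset.range (if j ∈ B then n j - i j else i j))).card : ℝ) /
        |∏ j, (i j : ℝ)|, ?_, ?_⟩
  · exact mul_nonneg (abs_nonneg _) (Finset.sum_nonneg fun _ _ => by positivity)
  · intro f x
    unfold mixedLogMean
    rw [abs_mul, mul_assoc]
    refine mul_le_mul_of_nonneg_left ?_ (abs_nonneg _)
    rw [Finset.sum_mul]
    refine (Finset.abs_sum_le_sum_abs _ _).trans (Finset.sum_le_sum fun i _ => ?_)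
    rw [abs_div, div_mul_eq_mul_div]
    exact div_le_div_of_nonneg_right (hr _ _ _) (abs_nonneg _)

lemma young_small {d b : ℕ} {Q : YoungFunction} {g : (Fin d → ℝ) → ℝ} (hg : MemOrlicz Q g)
    (hn : ¬ Integrable (fun x => |g x| * Real.log (1 + |g x|) ^ b) (cubeMeasure d)) :
    ∀ ε > 0, ∀ H : ℝ, ∃ h ≥ H, Q.toFun h ≤ ε * (h * Real.log (1 + h)^b) := by
  intro ε hε H
  by_contra hcon
  push Not at hcon
  apply hn
  obtain ⟨hgm, k, hk0, hki, -⟩ := hg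
  set H' := max H 1 with hH'
  have hH1 : 1 ≤ H' := le_max_right _ _
  set C : ℝ := 1 + Real.log (1+k) / Real.log 2 with hC
  have hl2 : 0 < Real.log 2 := Real.log_pos (by norm_num)
  have hlk : 0 ≤ Real.log (1+k) := Real.log_nonneg (by linarith)
  have hC0 : 0 ≤ C := by positivity
  have hHl : 0 ≤ Real.log (1 + k * H') := Real.log_nonneg (by nlinarith)
  have hi : Integrable (fun x => k * H' * Real.log (1 + k * H')^b +
      k * C^b / ε * Q.toFun (|g x| / k)) (cubeMeasure d) :=
    (integrable_const _).add (hki.const_mul _)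
  refine hi.mono' ?_ (ae_of_all _ fun x => ?_)
  · refine Measurable.aestronglyMeasurable ?_
    exact hgm.abs.mul ((Real.measurable_log.comp (hgm.abs.const_add 1)).pow_const b)
  · have ha := abs_nonneg (g x)
    have hl : 0 ≤ Real.log (1 + |g x|) := Real.log_nonneg (by linarith)
    rw [Real.norm_of_nonneg (by positivity)]
    have hQ0 := Q.nonneg (|g x| / k)
    set u := |g x| / k with hu
    have hgu : |g x| = k * u := by rw [hu]; field_simp
    rcases le_total u H' with h | h
    · have h1 : |g x| ≤ k * H' := by rw [hgu]; gcongr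
      have h2 : Real.log (1 + |g x|) ≤ Real.log (1 + k * H') :=
        Real.log_le_log (by linarith) (by linarith)
      have h3 : |g x| * Real.log (1 + |g x|)^b ≤ k * H' * Real.log (1 + k * H')^b :=
        mul_le_mul h1 (pow_le_pow_left₀ hl h2 b) (by positivity) (by positivity)
      have : 0 ≤ k * C^b / ε * Q.toFun u := by positivity
      linarith
    · have hu1 : 1 ≤ u := hH1.trans h
      have h1 := hcon u ((le_max_left _ _).trans h)
      have h2 : Real.log (1 + |g x|) ≤ C * Real.log (1 + u) := by
        have e1 : Real.log (1 + |g x|) ≤ Real.log ((1+k) * (1+u)) := by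
          refine Real.log_le_log (by linarith) ?_
          rw [hgu]; nlinarith
        rw [Real.log_mul (by positivity) (by positivity)] at e1
        have e2 : Real.log 2 ≤ Real.log (1+u) := Real.log_le_log (by norm_num) (by linarith)
        have e3 : Real.log (1+k) ≤ Real.log (1+k) / Real.log 2 * Real.log (1+u) := by
          calc Real.log (1+k) = Real.log (1+k) / Real.log 2 * Real.log 2 := by field_simp
            _ ≤ _ := mul_le_mul_of_nonneg_left e2 (by positivity)
        rw [hC, add_mul, one_mul]; linarith
      have h3 : Real.log (1 + |g x|)^b ≤ C^b * Real.log (1+u)^b := by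
        rw [← mul_pow]; exact pow_le_pow_left₀ hl h2 b
      have h4 : |g x| * Real.log (1 + |g x|)^b ≤ k * C^b / ε * (ε * (u * Real.log (1+u)^b)) := by
        calc |g x| * Real.log (1 + |g x|)^b ≤ |g x| * (C^b * Real.log (1+u)^b) :=
              mul_le_mul_of_nonneg_left h3 ha
          _ = _ := by rw [hgu]; field_simp
      have h5 : k * C^b / ε * (ε * (u * Real.log (1+u)^b)) ≤ k * C^b / ε * Q.toFun u :=
        mul_le_mul_of_nonneg_left h1.le (by positivity)
      have : 0 ≤ k * H' * Real.log (1 + k * H')^b := by positivity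
      linarith

/-- The exhausting sets. -/
def badF {d : ℕ} (B : Finset (Fin d)) (k : ℕ) : Set ((Fin d → ℝ) → ℝ) :=
  {f | ∀ n ≥ k, (cubeMeasure d).real {x | (k:ℝ) ≤ |mixedLogMean B f (fun _ => n) x|} ≤ 1/16}

lemma conv_mem_badF {d : ℕ} (B : Finset (Fin d)) {f g : (Fin d → ℝ) → ℝ} (hg : Measurable g)
    (h : TendstoInMeasure (cubeMeasure d)
        (fun n x => mixedLogMean B f (fun _ => n) x) atTop g) : ∃ k, f ∈ badF B k := by
  rw [tendstoInMeasure_iff_measureReal_dist] at h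
  have h1 := (h 1 one_pos).eventually_lt_const (u := 1/32) (by norm_num)
  obtain ⟨n0, hn0⟩ := eventually_atTop.1 h1
  have h2 : Tendsto (fun k : ℕ => (cubeMeasure d).real {x | (k:ℝ) ≤ |g x|}) atTop (nhds 0) := by
    have h3 : Tendsto (fun k : ℕ => (cubeMeasure d) {x | (k:ℝ) ≤ |g x|}) atTop
        (nhds ((cubeMeasure d) (⋂ k : ℕ, {x | (k:ℝ) ≤ |g x|}))) := by
      refine tendsto_measure_iInter_atTop ?_ ?_ ⟨0, measure_ne_top _ _⟩
      · exact fun k => (measurableSet_le measurable_const hg.abs).nullMeasurableSet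
      · intro a b hab x hx
        have : (b:ℝ) ≤ |g x| := hx
        have h4 : (a:ℝ) ≤ b := by exact_mod_cast hab
        exact h4.trans this
    have h4 : (⋂ k : ℕ, {x | (k:ℝ) ≤ |g x|}) = ∅ := by
      refine Set.eq_empty_of_forall_notMem fun x hx => ?_
      obtain ⟨k, hk⟩ := exists_nat_gt |g x|
      have : (k:ℝ) ≤ |g x| := Set.mem_iInter.1 hx k
      linarith
    rw [h4, measure_empty] at h3
    have := (ENNReal.tendsto_toReal ENNReal.zero_ne_top).comp h3
    simpa [Measure.real, Function.comp_def] using this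
  obtain ⟨k0, hk0⟩ := eventually_atTop.1 (h2.eventually_lt_const (u := 1/32) (by norm_num))
  refine ⟨max n0 (k0 + 1), fun n hn => ?_⟩
  have hs : {x | ((max n0 (k0+1) : ℕ):ℝ) ≤ |mixedLogMean B f (fun _ => n) x|} ⊆
      {x | 1 ≤ dist (mixedLogMean B f (fun _ => n) x) (g x)} ∪ {x | (k0:ℝ) ≤ |g x|} := by
    intro x hx
    have hx : ((max n0 (k0+1) : ℕ):ℝ) ≤ |mixedLogMean B f (fun _ => n) x| := hx
    have h4 : ((k0 + 1 : ℕ):ℝ) ≤ ((max n0 (k0+1) : ℕ):ℝ) := by exact_mod_cast le_max_right _ _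
    push_cast at h4 hx
    by_cases h5 : (k0:ℝ) ≤ |g x|
    · exact Or.inr h5
    · left
      show 1 ≤ dist (mixedLogMean B f (fun _ => n) x) (g x)
      rw [Real.dist_eq]
      have := abs_sub_abs_le_abs_sub (mixedLogMean B f (fun _ => n) x) (g x)
      linarith
  have h5 := hn0 n ((le_max_left _ _).trans hn)
  have h6 := hk0 k0 le_rfl
  calc _ ≤ _ := measureReal_mono hs
    _ ≤ _ := measureReal_union_le _ _
    _ ≤ 1/16 := by linarith

lemma badF_nowhereDense {d : ℕ} (B : Finset (Fin d)) (hB : 1 < B.card) (Q : YoungFunction)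
    (hQ : ∀ ε > 0, ∀ H : ℝ, ∃ h ≥ H, Q.toFun h ≤ ε * (h * Real.log (1 + h)^(B.card - 1))) (k : ℕ) :
    OrliczNowhereDense Q (badF B k) := by
  intro f hf ε hε
  obtain ⟨u1, hu1⟩ := eventually_atTop.1 (Q.tendsto_atTop.eventually_ge_atTop 1)
  set u0 := max u1 1 with hu0def
  have hu0 : 0 ≤ u0 := zero_le_one.trans (le_max_right _ _)
  have hu : ∀ u, u0 ≤ u → u ≤ Q.toFun u := by
    intro u h
    have hpos : 0 < u := lt_of_lt_of_le one_pos ((le_max_right _ _).trans h)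
    have := hu1 u ((le_max_left _ _).trans h)
    rwa [le_div_iff₀ hpos, one_mul] at this
  obtain ⟨ξ, hξm, hξ, n, hn, hμ⟩ := exists_bad B hB Q hQ (4 * (k+1) / ε) (by positivity) k
  obtain ⟨C, hC0, hC⟩ := mixedLogMean_bound B (fun _ : Fin d => n)
  obtain ⟨a, ha⟩ := hf.2
  have hfi := (orlicz_int hu0 hu hf.1 ha).1
  have hξi := (orlicz_int hu0 hu hξm hξ).1
  set f2 : (Fin d → ℝ) → ℝ := fun x => f x + ε/2 * ξ x with hf2
  have he2 : |ε/2| = ε/2 := abs_of_pos (by positivity)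
  have hξ2 : ε/2 ∈ orliczSet Q (fun x => ε/2 * ξ x) := by
    have := orliczSet_mul (c := ε/2) (by rw [he2]; positivity) hξ
    rwa [he2, mul_one] at this
  have hf2m : MemOrlicz Q f2 :=
    ⟨hf.1.add (hξm.const_mul _), _, orliczSet_add hf.1 (hξm.const_mul _) ha hξ2⟩
  -- choose g
  obtain ⟨g, hg, hgf, hgμ⟩ : ∃ g, MemOrlicz Q g ∧
      (∃ z ∈ orliczSet Q (g - f), z ≤ ε/2) ∧
      1/16 < (cubeMeasure d).real {x | (k:ℝ) + 1 ≤ |mixedLogMean B g (fun _ => n) x|} := by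
    have hs : {x | 4 * ((k:ℝ)+1) / ε ≤ |mixedLogMean B ξ (fun _ => n) x|} ⊆
        {x | (k:ℝ) + 1 ≤ |mixedLogMean B f (fun _ => n) x|} ∪
        {x | (k:ℝ) + 1 ≤ |mixedLogMean B f2 (fun _ => n) x|} := by
      intro x hx
      have hx : 4 * ((k:ℝ)+1) / ε ≤ |mixedLogMean B ξ (fun _ => n) x| := hx
      by_contra hcon
      rw [Set.mem_union, not_or] at hcon
      have h1 : |mixedLogMean B f (fun _ => n) x| < (k:ℝ) + 1 := not_le.1 hcon.1
      have h2 : |mixedLogMean B f2 (fun _ => n) x| < (k:ℝ) + 1 := not_le.1 hcon.2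
      rw [hf2, mixedLogMean_lin B hfi hξi] at h2
      have h3 : 2 * ((k:ℝ)+1) ≤ |ε/2 * mixedLogMean B ξ (fun _ => n) x| := by
        rw [abs_mul, he2]
        have := mul_le_mul_of_nonneg_left hx (by positivity : 0 ≤ ε/2)
        calc 2 * ((k:ℝ)+1) = ε/2 * (4 * ((k:ℝ)+1) / ε) := by field_simp; ring
          _ ≤ _ := this
      have h4 := abs_sub (mixedLogMean B f (fun _ => n) x + ε/2 * mixedLogMean B ξ (fun _ => n) x)
        (mixedLogMean B f (fun _ => n) x)
      rw [add_sub_cancel_left] at h4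
      linarith
    have hm := (measureReal_mono (μ := cubeMeasure d) hs).trans (measureReal_union_le _ _)
    by_cases hc : 1/16 < (cubeMeasure d).real {x | (k:ℝ) + 1 ≤ |mixedLogMean B f (fun _ => n) x|}
    · refine ⟨f, hf, ⟨ε/2, ⟨by positivity, ?_, ?_⟩, le_rfl⟩, hc⟩
      · simp [Q.map_zero]
      · simp [Q.map_zero]
    · refine ⟨f2, hf2m, ⟨ε/2, ?_, le_rfl⟩, by linarith⟩
      have e : f2 - f = fun x => ε/2 * ξ x := by funext x; simp [hf2]
      rw [e]; exact hξ2
  have hD : 0 < C * (u0+1) + 1 := by positivity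
  refine ⟨g, hg, min (ε/2) (1 / (C * (u0+1) + 1)), by positivity, ?_, ?_⟩
  · intro h hh hlt
    obtain ⟨z, hz, hz2⟩ := hgf
    obtain ⟨y, hy, hy2⟩ := orliczNorm_lt (hh.sub hg) hlt
    have hy3 := hy2.trans_le (min_le_left _ _)
    have := orliczSet_add (hh.1.sub hg.1) (hg.1.sub hf.1) hy hz
    have e : h - f = fun x => (h - g) x + (g - f) x := by funext x; simp
    rw [e]
    exact (orliczNorm_le this).trans_lt (by linarith)
  · intro h hh hlt hmem
    obtain ⟨y, hy, hy2⟩ := orliczNorm_lt (hh.sub hg) hlt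
    have hy3 := hy2.trans_le (min_le_right _ _)
    obtain ⟨hdi, hdb⟩ := orlicz_int hu0 hu (hh.1.sub hg.1) hy
    obtain ⟨b, hb⟩ := hg.2
    have hgi := (orlicz_int hu0 hu hg.1 hb).1
    have hle : ∀ x, |mixedLogMean B (h - g) (fun _ => n) x| ≤ 1 := by
      intro x
      refine (hC _ x).trans ?_
      have h1 := mul_le_mul_of_nonneg_left hdb hC0
      rw [lt_div_iff₀ hD] at hy3
      have := hy.1
      nlinarith
    have e : h = fun x => g x + 1 * (h - g) x := by funext x; simp
    have hs : {x | (k:ℝ) + 1 ≤ |mixedLogMean B g (fun _ => n) x|} ⊆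
        {x | (k:ℝ) ≤ |mixedLogMean B h (fun _ => n) x|} := by
      intro x hx
      have hx : (k:ℝ) + 1 ≤ |mixedLogMean B g (fun _ => n) x| := hx
      show (k:ℝ) ≤ |mixedLogMean B h (fun _ => n) x|
      have h1 : mixedLogMean B h (fun _ => n) x = mixedLogMean B g (fun _ => n) x +
          1 * mixedLogMean B (h - g) (fun _ => n) x := by
        conv_lhs => rw [e]
        exact mixedLogMean_lin B hgi hdi 1 _ x
      have h2 := hle x
      have h3 := abs_sub (mixedLogMean B h (fun _ => n) x) (mixedLogMean B (h - g) (fun _ => n) x)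
      have h4 : mixedLogMean B h (fun _ => n) x - mixedLogMean B (h - g) (fun _ => n) x =
        mixedLogMean B g (fun _ => n) x := by rw [h1]; ring
      rw [h4] at h3
      linarith
    have h1 := measureReal_mono (μ := cubeMeasure d) hs
    have h2 := hmem n hn
    linarith

/-- Theorem (baire). If `|B| > 1` and `L_Q(I^d) ⊄ L log^{|B|-1} L(I^d)`, the
set of `f ∈ L_Q(I^d)` whose means `(L_{n(B)} ∘ R_{n(B')})(f)` converge in measure to an
a.e. finite function is of first Baire category in `L_Q(I^d)`. -/
theorem stmt6 (d : ℕ) (hd : 1 ≤ d) (B : Finset (Fin d)) (hB : 1 < B.card)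
    (Q : YoungFunction)
    (hQ : ∃ g : (Fin d → ℝ) → ℝ, MemOrlicz Q g ∧
      ¬ Integrable (fun x => |g x| * Real.log (1 + |g x|) ^ (B.card - 1)) (cubeMeasure d)) :
    OrliczMeager Q {f | MemOrlicz Q f ∧ ∃ g : (Fin d → ℝ) → ℝ, Measurable g ∧
      TendstoInMeasure (cubeMeasure d)
        (fun n x => mixedLogMean B f (fun _ => n) x) atTop g} := by
  obtain ⟨g, hg, hgn⟩ := hQ
  refine ⟨badF B, badF_nowhereDense B hB Q (young_small hg hgn), ?_⟩
  rintro f ⟨-, g, hgm, hconv⟩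
  exact Set.mem_iUnion.2 (conv_mem_badF B hgm hconv)

end
end

section
/- There exists an absolute constant C such that for every n ≥ 2, every f ∈ L^1[0,1) and every λ > 0, the Nörlund logarithmic mean satisfies λ · mes{x ∈ [0,1) : |(f ∗ F_n)(x)| > λ} ≤ C ‖f‖_{L^1[0,1)}; that is, the operators f ↦ f ∗ F_n are uniformly of weak type (1,1). -/
open MeasureTheory Filter

noncomputable section

/-! ### Burkholder's function -/

/-- Burkholder's function for the weak type inequality. -/
def burkU (x y : ℝ) : ℝ := if |x| + |y| ≤ 1 then y ^ 2 - x ^ 2 else 1 - 2 * |x|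

lemma burkU_le (x y : ℝ) : burkU x y ≤ 1 - 2 * |x| := by
  unfold burkU
  split_ifs with h
  · have h1 := abs_nonneg x
    have h2 := abs_nonneg y
    rw [← sq_abs x, ← sq_abs y]
    nlinarith
  · exact le_refl _

lemma burkU_ge (x y : ℝ) : (if 1 ≤ |y| then (1:ℝ) else 0) - 2 * |x| ≤ burkU x y := by
  unfold burkU
  have h1 := abs_nonneg x
  have h2 := abs_nonneg y
  rw [← sq_abs x, ← sq_abs y]
  split_ifs with h h3 h3
  · have : |x| = 0 := by linarith
    have : |y| = 1 := by linarith
    simp [*]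
  · linarith
  · nlinarith
  · linarith

lemma burk_tangent_aux (x y X Y : ℝ) (hX : 0 ≤ X) (_hY : 0 ≤ Y) (h : |x| + |y| ≤ 1)
    (hk : |Y - y| ≤ |X - x|) (ho : 1 ≤ X + Y) :
    1 - 2 * X ≤ y ^ 2 - x ^ 2 + 2 * y * (Y - y) - 2 * x * (X - x) := by
  have hx1 := le_abs_self x
  have hy1 := le_abs_self y
  have hy2 := neg_abs_le y
  have hx3 := abs_nonneg x
  have hy3 := abs_nonneg y
  have hxy : 0 ≤ 1 - x - y := by linarith
  by_cases hc : 2 * Y ≤ 1 - x + y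
  · nlinarith [mul_nonneg hxy (by linarith : 0 ≤ 1 - x + y - 2 * Y),
      mul_nonneg (by linarith : 0 ≤ X + Y - 1) (by linarith : 0 ≤ 1 - x)]
  · have hYy : y ≤ Y := by linarith
    rw [abs_of_nonneg (by linarith : 0 ≤ Y - y)] at hk
    rcases le_abs.1 hk with h5 | h5
    · nlinarith [mul_nonneg (by linarith : 0 ≤ X - x - (Y - y)) (by linarith : 0 ≤ 1 - x),
        mul_nonneg (by linarith : 0 ≤ 2 * Y - (1 - x + y)) (by linarith : 0 ≤ 1 - x + y)]
    · have h6 : x + y = 1 := by linarith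
      have h7 : X + Y = 1 := by linarith
      have h8 : x = 1 - y := by linarith
      have h9 : X = 1 - Y := by linarith
      subst h8 h9
      nlinarith

lemma burk_tangent (x y X Y : ℝ) (h : |x| + |y| ≤ 1)
    (hk : |Y - y| ≤ |X - x|) :
    burkU X Y ≤ y ^ 2 - x ^ 2 + 2 * y * (Y - y) - 2 * x * (X - x) := by
  unfold burkU
  split_ifs with ho
  · have := sq_le_sq' (by linarith [abs_nonneg (Y - y), abs_nonneg (X - x)]) hk
    rw [sq_abs, sq_abs] at this
    nlinarith
  · push Not at ho
    rcases abs_cases X with ⟨hX, hX0⟩ | ⟨hX, hX0⟩ <;> rcases abs_cases Y with ⟨hY, hY0⟩ | ⟨hY, hY0⟩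
    · have := burk_tangent_aux x y X Y hX0 hY0 h hk (by linarith)
      linarith
    · have := burk_tangent_aux x (-y) X (-Y) hX0 (by linarith) (by simpa using h)
        (by rwa [show -Y - -y = -(Y - y) by ring, abs_neg]) (by linarith)
      rw [hX]; nlinarith
    · have := burk_tangent_aux (-x) y (-X) Y (by linarith) hY0 (by simpa using h)
        (by rwa [show -X - -x = -(X - x) by ring, abs_neg]) (by linarith)
      rw [hX]; nlinarith
    · have := burk_tangent_aux (-x) (-y) (-X) (-Y) (by linarith) (by linarith) (by simpa using h)
        (by rwa [show -X - -x = -(X - x) by ring, abs_neg,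
              show -Y - -y = -(Y - y) by ring, abs_neg]) (by linarith)
      rw [hX]; nlinarith

lemma burk_mid (x y h k : ℝ) (hk : |k| ≤ |h|) :
    burkU (x + h) (y + k) + burkU (x - h) (y - k) ≤ 2 * burkU x y := by
  by_cases hi : |x| + |y| ≤ 1
  · have h1 := burk_tangent x y (x + h) (y + k) hi (by simpa using hk)
    have h2 := burk_tangent x y (x - h) (y - k) hi (by simpa using hk)
    have : burkU x y = y ^ 2 - x ^ 2 := by unfold burkU; rw [if_pos hi]
    rw [this]
    nlinarith
  · have h1 := burkU_le (x + h) (y + k)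
    have h2 := burkU_le (x - h) (y - k)
    have : burkU x y = 1 - 2 * |x| := by unfold burkU; rw [if_neg hi]
    rw [this]
    have h3 := abs_add_le (x + h) (x - h)
    rw [show x + h + (x - h) = 2 * x by ring, abs_mul, abs_two] at h3
    linarith

/-! ### The finite dyadic group -/

/-- Rademacher functions on the finite dyadic group. -/
def rr (M i : ℕ) (g : Fin M → ZMod 2) : ℝ :=
  if h : i < M then (if g ⟨i, h⟩ = 0 then 1 else -1) else 1

/-- The `i`-th coordinate vector. -/
def ee (M i : ℕ) : Fin M → ZMod 2 := fun j => if j.val = i then 1 else 0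

lemma rr_add (M i : ℕ) (a b : Fin M → ZMod 2) : rr M i (a + b) = rr M i a * rr M i b := by
  unfold rr
  split_ifs with h h1 h2 h3 h4 h5 h6 <;> simp_all
  · generalize a ⟨i, h⟩ = u at *
    generalize b ⟨i, h⟩ = v at *
    revert u v; decide

lemma rr_mul_self (M i : ℕ) (a : Fin M → ZMod 2) : rr M i a * rr M i a = 1 := by
  unfold rr
  split_ifs <;> simp

lemma rr_cases (M i : ℕ) (a : Fin M → ZMod 2) : rr M i a = 1 ∨ rr M i a = -1 := by
  unfold rr
  split_ifs <;> simp

lemma rr_abs (M i : ℕ) (a : Fin M → ZMod 2) : |rr M i a| = 1 := by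
  rcases rr_cases M i a with h | h <;> simp [h]

lemma rr_ee_self (M i : ℕ) (h : i < M) : rr M i (ee M i) = -1 := by
  simp [rr, ee, h]

lemma rr_ee_ne (M i j : ℕ) (h : j ≠ i) : rr M j (ee M i) = 1 := by
  simp [rr, ee, h]

lemma sum_shift (M : ℕ) (e : Fin M → ZMod 2) (F : (Fin M → ZMod 2) → ℝ) :
    ∑ g, F (g + e) = ∑ g, F g := Equiv.sum_comp (Equiv.addRight e) F

/-- Walsh functions on the finite group. -/
def WW (M k : ℕ) (g : Fin M → ZMod 2) : ℝ :=
  ∏ i ∈ Finset.range (k + 1), if k.testBit i then rr M i g else 1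

/-- Dirichlet kernels. -/
def DD (M n : ℕ) (g : Fin M → ZMod 2) : ℝ := ∑ k ∈ Finset.range n, WW M k g

/-- Unnormalised Fejer kernels. -/
def SS (M n : ℕ) (g : Fin M → ZMod 2) : ℝ := ∑ k ∈ Finset.range n, DD M (k + 1) g

/-- Unnormalised Norlund logarithmic kernels. -/
def PP (M n : ℕ) (g : Fin M → ZMod 2) : ℝ := ∑ i ∈ Finset.Ico 1 n, DD M (n - i) g / i

lemma WW_aux (M k L L' : ℕ) (hk : k < 2 ^ L) (hL : L ≤ L') (g : Fin M → ZMod 2) :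
    (∏ i ∈ Finset.range L, if k.testBit i then rr M i g else 1) =
    ∏ i ∈ Finset.range L', if k.testBit i then rr M i g else 1 := by
  apply Finset.prod_subset
  · intro i; simp; omega
  · intro i _ hi
    have : L ≤ i := by simpa using hi
    rw [Nat.testBit_lt_two_pow (lt_of_lt_of_le hk (Nat.pow_le_pow_right (by norm_num) this))]
    simp

lemma WW_eq (M k L : ℕ) (hk : k < 2 ^ L) (g : Fin M → ZMod 2) :
    WW M k g = ∏ i ∈ Finset.range L, if k.testBit i then rr M i g else 1 := by
  unfold WW
  have hk' : k < 2 ^ (k + 1) := lt_trans (Nat.lt_succ_self k) Nat.lt_two_pow_self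
  rw [WW_aux M k (k+1) (max (k+1) L) hk' (le_max_left _ _),
    WW_aux M k L (max (k+1) L) hk (le_max_right _ _)]

lemma WW_add (M k : ℕ) (a b : Fin M → ZMod 2) : WW M k (a + b) = WW M k a * WW M k b := by
  unfold WW
  rw [← Finset.prod_mul_distrib]
  apply Finset.prod_congr rfl
  intro i _
  split_ifs
  · exact rr_add _ _ _ _
  · simp

lemma WW_abs (M k : ℕ) (a : Fin M → ZMod 2) : |WW M k a| = 1 := by
  unfold WW
  rw [Finset.abs_prod]
  apply Finset.prod_eq_one
  intro i _
  split_ifs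
  · exact rr_abs _ _ _
  · simp

lemma WW_mul_self (M k : ℕ) (a : Fin M → ZMod 2) : WW M k a * WW M k a = 1 := by
  rw [← abs_mul_abs_self, WW_abs]; norm_num

lemma WW_two_pow_add (M N m : ℕ) (hm : m < 2 ^ N) (g : Fin M → ZMod 2) :
    WW M (2 ^ N + m) g = rr M N g * WW M m g := by
  rw [WW_eq M (2 ^ N + m) (N + 1) (by rw [pow_succ]; omega), Finset.prod_range_succ,
    WW_eq M m N hm, mul_comm]
  congr 1
  · rw [Nat.testBit_two_pow_add_eq, Nat.testBit_lt_two_pow hm]; simp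
  · apply Finset.prod_congr rfl
    intro i hi
    rw [Nat.testBit_two_pow_add_gt (by simpa using hi)]

lemma WW_zero (M : ℕ) (g : Fin M → ZMod 2) : WW M 0 g = 1 := by simp [WW]

lemma DD_zero (M : ℕ) (g : Fin M → ZMod 2) : DD M 0 g = 0 := by simp [DD]

lemma DD_one (M : ℕ) (g : Fin M → ZMod 2) : DD M 1 g = 1 := by simp [DD, WW_zero]

lemma DD_add (M N m : ℕ) (hm : m ≤ 2 ^ N) (g : Fin M → ZMod 2) :
    DD M (2 ^ N + m) g = DD M (2 ^ N) g + rr M N g * DD M m g := by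
  unfold DD
  rw [Finset.sum_range_add, Finset.mul_sum]
  congr 1
  apply Finset.sum_congr rfl
  intro i hi
  rw [WW_two_pow_add]
  have : i < m := by simpa using hi
  omega

lemma DD_two_pow_succ (M N : ℕ) (g : Fin M → ZMod 2) :
    DD M (2 ^ (N + 1)) g = DD M (2 ^ N) g + rr M N g * DD M (2 ^ N) g := by
  rw [pow_succ, mul_two, DD_add M N _ le_rfl]

lemma WW_compl (M N k : ℕ) (hk : k < 2 ^ N) (g : Fin M → ZMod 2) :
    WW M (2 ^ N - 1 - k) g = WW M (2 ^ N - 1) g * WW M k g := by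
  rw [WW_eq M _ N (by omega), WW_eq M (2 ^ N - 1) N (by omega), WW_eq M k N hk,
    ← Finset.prod_mul_distrib]
  apply Finset.prod_congr rfl
  intro i hi
  have hi : i < N := by simpa using hi
  rw [show 2 ^ N - 1 - k = 2 ^ N - (k + 1) by omega, Nat.testBit_two_pow_sub_succ hk,
    Nat.testBit_two_pow_sub_one]
  rcases h : k.testBit i <;> simp [hi, rr_mul_self]

lemma DD_sub (M N j : ℕ) (hj : j ≤ 2 ^ N) (g : Fin M → ZMod 2) :
    DD M (2 ^ N - j) g = DD M (2 ^ N) g - WW M (2 ^ N - 1) g * DD M j g := by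
  induction j with
  | zero => simp [DD_zero]
  | succ j ih =>
    have h1 := ih (by omega)
    have h2 : DD M (2 ^ N - j) g = DD M (2 ^ N - (j + 1)) g + WW M (2 ^ N - (j + 1)) g := by
      unfold DD
      rw [show 2 ^ N - j = 2 ^ N - (j + 1) + 1 by omega, Finset.sum_range_succ]
    have h3 : DD M (j + 1) g = DD M j g + WW M j g := by
      unfold DD
      rw [Finset.sum_range_succ]
    rw [show 2 ^ N - (j + 1) = 2 ^ N - 1 - j by omega] at *
    rw [WW_compl M N j (by omega)] at h2
    rw [h3]
    linarith

lemma rr_mul_DD (M N i : ℕ) (hi : i < N) (g : Fin M → ZMod 2) :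
    rr M i g * DD M (2 ^ N) g = DD M (2 ^ N) g := by
  induction N with
  | zero => omega
  | succ N ih =>
    rw [DD_two_pow_succ]
    rcases Nat.lt_succ_iff_lt_or_eq.1 hi with h | h
    · linear_combination (1 + rr M N g) * ih h
    · subst h
      linear_combination DD M (2 ^ i) g * rr_mul_self M i g

lemma WW_mul_DD (M N m : ℕ) (hm : m < 2 ^ N) (g : Fin M → ZMod 2) :
    WW M m g * DD M (2 ^ N) g = DD M (2 ^ N) g := by
  rw [WW_eq M m N hm]
  have : ∀ K ≤ N, (∏ i ∈ Finset.range K, if m.testBit i then rr M i g else 1) * DD M (2 ^ N) g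
      = DD M (2 ^ N) g := by
    intro K
    induction K with
    | zero => simp
    | succ K ih =>
      intro hK
      rw [Finset.prod_range_succ, mul_assoc]
      split_ifs
      · rw [rr_mul_DD M N K (by omega), ih (by omega)]
      · rw [one_mul, ih (by omega)]
  exact this N le_rfl

lemma WW_shift (M k i : ℕ) (hk : k < 2 ^ i) (g : Fin M → ZMod 2) :
    WW M k (g + ee M i) = WW M k g := by
  rw [WW_eq M k i hk, WW_eq M k i hk]
  apply Finset.prod_congr rfl
  intro j hj
  have hj : j < i := by simpa using hj
  rw [rr_add, rr_ee_ne M i j (by omega), mul_one]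

lemma DD_shift (M n i : ℕ) (hn : n ≤ 2 ^ i) (g : Fin M → ZMod 2) :
    DD M n (g + ee M i) = DD M n g := by
  unfold DD
  apply Finset.sum_congr rfl
  intro k hk
  have hk : k < n := by simpa using hk
  exact WW_shift M k i (by omega) g

lemma SS_shift (M n i : ℕ) (hn : n ≤ 2 ^ i) (g : Fin M → ZMod 2) :
    SS M n (g + ee M i) = SS M n g := by
  unfold SS
  apply Finset.sum_congr rfl
  intro k hk
  have hk : k < n := by simpa using hk
  exact DD_shift M _ i (by omega) g

/-- Independence of `1 + r_N` from functions not depending on the `N`-th digit. -/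
lemma sum_one_add_rr (M N : ℕ) (hN : N < M) (F : (Fin M → ZMod 2) → ℝ)
    (hF : ∀ g, F (g + ee M N) = F g) :
    ∑ g, |F g + rr M N g * F g| = ∑ g, |F g| := by
  have h := sum_shift M (ee M N) (fun g => |F g + rr M N g * F g|)
  simp only [hF, rr_add, rr_ee_self M N hN] at h
  have h2 : ∑ g, (|F g + rr M N g * F g| + |F g + rr M N g * -1 * F g|) = ∑ g, 2 * |F g| := by
    apply Finset.sum_congr rfl
    intro g _
    rcases rr_cases M N g with h | h <;> rw [h]
    · rw [show F g + 1 * F g = 2 * F g by ring, show F g + 1 * -1 * F g = 0 by ring, abs_mul]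
      simp
    · rw [show F g + -1 * F g = 0 by ring, show F g + -1 * -1 * F g = 2 * F g by ring, abs_mul]
      simp
  rw [Finset.sum_add_distrib, h, ← Finset.mul_sum] at h2
  linarith

lemma DD_norm (M N : ℕ) (hN : N ≤ M) :
    ∑ g, |DD M (2 ^ N) g| = (Fintype.card (Fin M → ZMod 2) : ℝ) := by
  induction N with
  | zero => simp [DD_one]
  | succ N ih =>
    simp only [DD_two_pow_succ]
    rw [sum_one_add_rr M N (by omega) _ (DD_shift M _ N le_rfl), ih (by omega)]

lemma SS_add (M N m : ℕ) (hm : m ≤ 2 ^ N) (g : Fin M → ZMod 2) :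
    SS M (2 ^ N + m) g = SS M (2 ^ N) g + m * DD M (2 ^ N) g + rr M N g * SS M m g := by
  unfold SS
  rw [Finset.sum_range_add, Finset.mul_sum, add_assoc]
  congr 1
  have : (m : ℝ) * DD M (2 ^ N) g = ∑ k ∈ Finset.range m, DD M (2 ^ N) g := by simp
  rw [this, ← Finset.sum_add_distrib]
  apply Finset.sum_congr rfl
  intro i hi
  have : i < m := by simpa using hi
  rw [add_assoc, DD_add]
  omega

lemma SS_norm_pow (M N : ℕ) (hN : N ≤ M) :
    ∑ g, |SS M (2 ^ N) g| ≤ 2 ^ N * (Fintype.card (Fin M → ZMod 2) : ℝ) := by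
  induction N with
  | zero => simp [SS, DD_one]
  | succ N ih =>
    have h1 := ih (by omega)
    have h2 : ∀ g, |SS M (2 ^ (N + 1)) g| ≤
        |SS M (2 ^ N) g + rr M N g * SS M (2 ^ N) g| + 2 ^ N * |DD M (2 ^ N) g| := by
      intro g
      rw [pow_succ, mul_two, SS_add M N _ le_rfl]
      have := abs_add_le (SS M (2 ^ N) g + rr M N g * SS M (2 ^ N) g) (2 ^ N * DD M (2 ^ N) g)
      rw [abs_mul (2 ^ N), abs_of_pos (by positivity : (0:ℝ) < 2 ^ N)] at this
      refine le_trans (le_of_eq ?_) this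
      congr 1
      push_cast
      ring
    have h3 := Finset.sum_le_sum (fun g (_ : g ∈ Finset.univ) => h2 g)
    rw [Finset.sum_add_distrib, ← Finset.mul_sum, DD_norm M N (by omega),
      sum_one_add_rr M N (by omega) _ (SS_shift M _ N le_rfl)] at h3
    rw [show (2:ℝ) ^ (N + 1) = 2 ^ N * 2 from pow_succ _ _]
    linarith

lemma SS_norm (M N : ℕ) (hN : N ≤ M) : ∀ n ≤ 2 ^ N,
    ∑ g, |SS M n g| ≤ 2 * n * (Fintype.card (Fin M → ZMod 2) : ℝ) := by
  induction N with
  | zero =>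
    intro n hn
    have : n = 0 ∨ n = 1 := by simp at hn; omega
    rcases this with rfl | rfl
    · simp [SS]
    · simp [SS, DD_one]
  | succ N ih =>
    intro n hn
    by_cases hn' : n ≤ 2 ^ N
    · exact ih (by omega) n hn'
    · obtain ⟨m, rfl⟩ : ∃ m, n = 2 ^ N + m := ⟨n - 2 ^ N, by omega⟩
      have hm : m ≤ 2 ^ N := by rw [pow_succ] at hn; omega
      have h1 := ih (by omega) m hm
      have h2 : ∀ g, |SS M (2 ^ N + m) g| ≤
          |SS M (2 ^ N) g| + m * |DD M (2 ^ N) g| + |SS M m g| := by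
        intro g
        rw [SS_add M N _ hm]
        refine (abs_add_three _ _ _).trans ?_
        rw [abs_mul, abs_mul, rr_abs, one_mul]
        simp
      have h3 := Finset.sum_le_sum (fun g (_ : g ∈ Finset.univ) => h2 g)
      rw [Finset.sum_add_distrib, Finset.sum_add_distrib, ← Finset.mul_sum,
        DD_norm M N (by omega)] at h3
      have h4 := SS_norm_pow M N (by omega)
      have h5 : (m : ℝ) * (Fintype.card (Fin M → ZMod 2) : ℝ)
          ≤ 2 ^ N * (Fintype.card (Fin M → ZMod 2) : ℝ) := by
        apply mul_le_mul_of_nonneg_right _ (by positivity)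
        exact_mod_cast hm
      push_cast
      linarith

lemma abel_norm (M N : ℕ) (hN : N ≤ M) (J : ℕ) (hJ : J ≤ 2 ^ N) : ∀ c : ℕ → ℝ, (∀ j, 0 ≤ c j) →
    Antitone c → ∑ g, |∑ j ∈ Finset.range J, c j * DD M (j + 1) g| ≤
      2 * (∑ j ∈ Finset.range J, c j) * (Fintype.card (Fin M → ZMod 2) : ℝ) := by
  induction J with
  | zero => intro c _ _; simp
  | succ J ih =>
    intro c hc ha
    have h1 := ih (by omega) (fun j => max (c j - c J) 0) (fun j => le_max_right _ _)
      (fun i j hij => max_le_max_right _ (sub_le_sub_right (ha hij) _))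
    have hmax : ∀ j ∈ Finset.range J, max (c j - c J) 0 = c j - c J := by
      intro j hj
      have hj : j < J := by simpa using hj
      exact max_eq_left (sub_nonneg.2 (ha hj.le))
    have hs : ∀ g, ∑ j ∈ Finset.range J, max (c j - c J) 0 * DD M (j + 1) g
        = ∑ j ∈ Finset.range J, (c j - c J) * DD M (j + 1) g :=
      fun g => Finset.sum_congr rfl (fun j hj => by rw [hmax j hj])
    rw [Finset.sum_congr rfl hmax] at h1
    simp only [hs] at h1
    have h2 : ∀ g, |∑ j ∈ Finset.range (J + 1), c j * DD M (j + 1) g| ≤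
        |∑ j ∈ Finset.range J, (c j - c J) * DD M (j + 1) g| + c J * |SS M (J + 1) g| := by
      intro g
      rw [← abs_of_nonneg (hc J), ← abs_mul, abs_of_nonneg (hc J)]
      refine le_trans (le_of_eq ?_) (abs_add_le _ _)
      congr 1
      unfold SS
      simp only [sub_mul, Finset.sum_sub_distrib, Finset.sum_range_succ, Finset.mul_sum, mul_add]
      ring
    have h3 := Finset.sum_le_sum (fun g (_ : g ∈ Finset.univ) => h2 g)
    rw [Finset.sum_add_distrib, ← Finset.mul_sum] at h3
    have h4 := mul_le_mul_of_nonneg_left (SS_norm M N hN (J + 1) hJ) (hc J)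
    rw [Finset.sum_sub_distrib] at h1
    rw [Finset.sum_range_succ]
    simp at h1
    push_cast at h4
    simp at h3 h4 ⊢
    nlinarith

lemma logSum_eq (n : ℕ) : logSum n = ∑ k ∈ Finset.Ico 1 n, (1 : ℝ) / k := by
  unfold logSum
  apply Finset.sum_congr _ (fun _ _ => rfl)
  ext k; simp; omega

lemma PP_rec (M N m : ℕ) (hm : m < 2 ^ N) (g : Fin M → ZMod 2) :
    PP M (2 ^ N + m) g = logSum (2 ^ N + m) * DD M (2 ^ N) g + rr M N g * PP M m g
      - WW M (2 ^ N - 1) g *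
        ∑ j ∈ Finset.range (2 ^ N - 1), (1 / ((m + 1 + j : ℕ) : ℝ)) * DD M (j + 1) g := by
  have hP : PP M m g = ∑ i ∈ Finset.Ico 1 (m + 1), DD M (m - i) g / i := by
    unfold PP
    rcases Nat.eq_zero_or_pos m with h | h
    · subst h; simp
    · rw [Finset.sum_Ico_succ_top h]; simp [DD_zero]
  have h1 : ∑ i ∈ Finset.Ico 1 (m + 1), DD M (2 ^ N + m - i) g / i =
      (∑ i ∈ Finset.Ico 1 (m + 1), 1 / (i : ℝ)) * DD M (2 ^ N) g + rr M N g * PP M m g := by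
    rw [hP, Finset.mul_sum, Finset.sum_mul, ← Finset.sum_add_distrib]
    apply Finset.sum_congr rfl
    intro i hi
    have hi := Finset.mem_Ico.1 hi
    rw [show 2 ^ N + m - i = 2 ^ N + (m - i) by omega, DD_add M N _ (by omega)]
    ring
  have h2 : ∑ i ∈ Finset.Ico (m + 1) (2 ^ N + m), DD M (2 ^ N + m - i) g / i =
      (∑ i ∈ Finset.Ico (m + 1) (2 ^ N + m), 1 / (i : ℝ)) * DD M (2 ^ N) g - WW M (2 ^ N - 1) g *
        ∑ j ∈ Finset.range (2 ^ N - 1), (1 / ((m + 1 + j : ℕ) : ℝ)) * DD M (j + 1) g := by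
    rw [Finset.sum_Ico_eq_sum_range, Finset.sum_Ico_eq_sum_range,
      show 2 ^ N + m - (m + 1) = 2 ^ N - 1 by omega, Finset.sum_mul, Finset.mul_sum,
      ← Finset.sum_sub_distrib]
    apply Finset.sum_congr rfl
    intro j hj
    have hj := Finset.mem_range.1 hj
    rw [show 2 ^ N + m - (m + 1 + j) = 2 ^ N - (j + 1) by omega, DD_sub M N _ (by omega)]
    ring
  rw [logSum_eq]
  unfold PP at *
  rw [← Finset.sum_Ico_consecutive _ (by omega : 1 ≤ m + 1) (by omega : m + 1 ≤ 2 ^ N + m), h1, h2,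
    ← Finset.sum_Ico_consecutive (fun k : ℕ => (1:ℝ) / k) (by omega : 1 ≤ m + 1)
      (by omega : m + 1 ≤ 2 ^ N + m)]
  ring

lemma logSum_nonneg (n : ℕ) : 0 ≤ logSum n := by
  unfold logSum
  positivity

lemma logSum_mono : Monotone logSum := by
  intro a b h
  rw [logSum_eq, logSum_eq]
  apply Finset.sum_le_sum_of_subset_of_nonneg
  · exact Finset.Ico_subset_Ico_right h
  · intros; positivity

/-- Decomposition of the logarithmic kernel. -/
lemma PP_decomp (M N : ℕ) (hN : N ≤ M) : ∀ n < 2 ^ N, ∃ (a : ℕ → ℝ) (E : (Fin M → ZMod 2) → ℝ),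
    (∀ k, |a k| ≤ logSum n) ∧
    ∑ g, |E g| ≤ 2 * logSum n * (Fintype.card (Fin M → ZMod 2) : ℝ) ∧
    ∀ g, PP M n g = WW M n g * (∑ k ∈ Finset.range N, a k * (rr M k g * DD M (2 ^ k) g)) + E g := by
  induction N with
  | zero =>
    intro n hn
    have : n = 0 := by simpa using hn
    subst this
    exact ⟨fun _ => 0, fun _ => 0, by simp [logSum], by simp [logSum], by simp [PP]⟩
  | succ N ih =>
    intro n hn
    by_cases hn' : n < 2 ^ N
    · obtain ⟨a, E, h1, h2, h3⟩ := ih (by omega) n hn'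
      refine ⟨fun k => if k < N then a k else 0, E, ?_, h2, ?_⟩
      · intro k
        dsimp only
        split_ifs
        · exact h1 k
        · simpa using logSum_nonneg n
      · intro g
        rw [h3 g, Finset.sum_range_succ]
        simp only [lt_irrefl, if_false, zero_mul, add_zero]
        congr 2
        apply Finset.sum_congr rfl
        intro k hk
        rw [if_pos (by simpa using hk)]
    · obtain ⟨m, rfl⟩ : ∃ m, n = 2 ^ N + m := ⟨n - 2 ^ N, by omega⟩
      have hm : m < 2 ^ N := by rw [pow_succ] at hn; omega
      obtain ⟨a, E, h1, h2, h3⟩ := ih (by omega) m hm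
      have hmono : logSum m ≤ logSum (m + 1) := logSum_mono (by omega)
      have hmono2 : logSum m ≤ logSum (2 ^ N + m) := logSum_mono (by omega)
      refine ⟨fun k => if k < N then a k else logSum (2 ^ N + m), fun g => rr M N g * E g
        - WW M (2 ^ N - 1) g *
        ∑ j ∈ Finset.range (2 ^ N - 1), (1 / ((m + 1 + j : ℕ) : ℝ)) * DD M (j + 1) g, ?_, ?_, ?_⟩
      · intro k
        dsimp only
        split_ifs
        · exact (h1 k).trans hmono2
        · rw [abs_of_nonneg (logSum_nonneg _)]
      · have hA := abel_norm M N (by omega) (2 ^ N - 1) (by omega)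
          (fun j => 1 / ((m + 1 + j : ℕ) : ℝ)) (fun j => by positivity)
          (fun i j hij => by
            apply one_div_le_one_div_of_le
            · positivity
            · exact_mod_cast (by omega : m + 1 + i ≤ m + 1 + j))
        have hB : ∑ j ∈ Finset.range (2 ^ N - 1), 1 / ((m + 1 + j : ℕ) : ℝ)
            = logSum (2 ^ N + m) - logSum (m + 1) := by
          rw [logSum_eq, logSum_eq, ← Finset.sum_Ico_consecutive (fun k : ℕ => (1:ℝ) / k)
            (by omega : 1 ≤ m + 1) (by omega : m + 1 ≤ 2 ^ N + m),
            Finset.sum_Ico_eq_sum_range _ (m + 1), show 2 ^ N + m - (m + 1) = 2 ^ N - 1 by omega]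
          ring
        rw [hB] at hA
        have hC : ∀ g, |rr M N g * E g - WW M (2 ^ N - 1) g *
            ∑ j ∈ Finset.range (2 ^ N - 1), (1 / ((m + 1 + j : ℕ) : ℝ)) * DD M (j + 1) g| ≤
            |E g| + |∑ j ∈ Finset.range (2 ^ N - 1), (1 / ((m + 1 + j : ℕ) : ℝ)) * DD M (j + 1) g| := by
          intro g
          refine (abs_sub _ _).trans ?_
          rw [abs_mul, abs_mul, rr_abs, WW_abs, one_mul, one_mul]
        have hD := Finset.sum_le_sum (fun g (_ : g ∈ Finset.univ) => hC g)
        rw [Finset.sum_add_distrib] at hD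
        have hcard : (0:ℝ) ≤ (Fintype.card (Fin M → ZMod 2) : ℝ) := by positivity
        nlinarith [mul_le_mul_of_nonneg_right hmono hcard]
      · intro g
        rw [PP_rec M N m hm, h3 g, Finset.sum_range_succ, WW_two_pow_add M N m hm]
        have : ∑ k ∈ Finset.range N, (if k < N then a k else logSum (2 ^ N + m)) *
            (rr M k g * DD M (2 ^ k) g) = ∑ k ∈ Finset.range N, a k * (rr M k g * DD M (2 ^ k) g) := by
          apply Finset.sum_congr rfl
          intro k hk
          rw [if_pos (by simpa using hk)]
        rw [this]
        simp only [lt_irrefl, if_false]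
        linear_combination (-logSum (2 ^ N + m) * rr M N g * rr M N g) * WW_mul_DD M N m hm g -
          (logSum (2 ^ N + m) * DD M (2 ^ N) g) * rr_mul_self M N g

/-! ### Weak type estimate on the finite group -/

/-- Convolution on the finite group. -/
def cv (M : ℕ) (h K : (Fin M → ZMod 2) → ℝ) (a : Fin M → ZMod 2) : ℝ := ∑ b, h b * K (a + b)

lemma cv_norm (M : ℕ) (h K : (Fin M → ZMod 2) → ℝ) :
    ∑ a, |cv M h K a| ≤ (∑ b, |h b|) * ∑ g, |K g| := by
  unfold cv
  calc ∑ a, |∑ b, h b * K (a + b)| ≤ ∑ a, ∑ b, |h b| * |K (a + b)| := by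
        apply Finset.sum_le_sum
        intro a _
        refine (Finset.abs_sum_le_sum_abs _ _).trans (le_of_eq ?_)
        simp only [abs_mul]
    _ = ∑ b, |h b| * ∑ g, |K g| := by
        rw [Finset.sum_comm]
        apply Finset.sum_congr rfl
        intro b _
        rw [← Finset.mul_sum, sum_shift M b (fun g => |K g|)]
    _ = _ := by rw [Finset.sum_mul]

lemma burk_sum (M : ℕ) (h : (Fin M → ZMod 2) → ℝ) (a : ℕ → ℝ) (ha : ∀ k, |a k| ≤ 1) :
    ∀ N ≤ M, ∑ x, burkU (cv M h (DD M (2 ^ N)) x)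
      (cv M h (fun g => ∑ k ∈ Finset.range N, a k * (rr M k g * DD M (2 ^ k) g)) x) ≤ 0 := by
  intro N
  induction N with
  | zero =>
    intro _
    apply Finset.sum_nonpos
    intro x _
    have : cv M h (fun g => ∑ k ∈ Finset.range 0, a k * (rr M k g * DD M (2 ^ k) g)) x = 0 := by
      simp [cv]
    rw [this]
    unfold burkU
    split_ifs with h1
    · nlinarith [sq_nonneg (cv M h (DD M (2 ^ 0)) x)]
    · rw [abs_zero, add_zero] at h1
      linarith
  | succ N ih =>
    intro hN
    have h0 := ih (by omega)
    set f := cv M h (DD M (2 ^ N)) with hf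
    set G := cv M h (fun g => ∑ k ∈ Finset.range N, a k * (rr M k g * DD M (2 ^ k) g)) with hG
    set d := cv M h (fun g => rr M N g * DD M (2 ^ N) g) with hd
    have e1 : ∀ x, cv M h (DD M (2 ^ (N + 1))) x = f x + d x := by
      intro x
      simp only [hf, hd, cv, ← Finset.sum_add_distrib, DD_two_pow_succ, mul_add]
    have e2 : ∀ x, cv M h (fun g => ∑ k ∈ Finset.range (N + 1), a k * (rr M k g * DD M (2 ^ k) g)) x
        = G x + a N * d x := by
      intro x
      simp only [hG, hd, cv, Finset.mul_sum (s := Finset.univ), ← Finset.sum_add_distrib,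
        Finset.sum_range_succ]
      apply Finset.sum_congr rfl
      intros; ring
    have s1 : ∀ x, f (x + ee M N) = f x := by
      intro x
      simp only [hf, cv]
      apply Finset.sum_congr rfl
      intro b _
      rw [add_right_comm, DD_shift M _ N le_rfl]
    have s2 : ∀ x, d (x + ee M N) = - d x := by
      intro x
      simp only [hd, cv, ← Finset.sum_neg_distrib]
      apply Finset.sum_congr rfl
      intro b _
      rw [add_right_comm, DD_shift M _ N le_rfl, rr_add M N _ (ee M N), rr_ee_self M N (by omega)]
      ring
    have s3 : ∀ x, G (x + ee M N) = G x := by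
      intro x
      simp only [hG, cv]
      apply Finset.sum_congr rfl
      intro b _
      congr 1
      apply Finset.sum_congr rfl
      intro k hk
      have hk : k < N := by simpa using hk
      rw [add_right_comm, DD_shift M _ N (Nat.pow_le_pow_right (by norm_num) hk.le), rr_add M k _ (ee M N),
        rr_ee_ne M N k (by omega), mul_one]
    simp only [e1, e2]
    have t := sum_shift M (ee M N) (fun x => burkU (f x + d x) (G x + a N * d x))
    simp only [s1, s2, s3] at t
    have key : ∑ x, (burkU (f x + d x) (G x + a N * d x) + burkU (f x + -d x) (G x + a N * -d x))
        ≤ ∑ x, 2 * burkU (f x) (G x) := by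
      apply Finset.sum_le_sum
      intro x _
      have := burk_mid (f x) (G x) (d x) (a N * d x) (by
        rw [abs_mul]
        exact mul_le_of_le_one_left (abs_nonneg _) (ha N))
      rwa [sub_eq_add_neg, sub_eq_add_neg, ← mul_neg] at this
    rw [Finset.sum_add_distrib, t, ← Finset.mul_sum] at key
    linarith

lemma burk_weak_one (M : ℕ) (h : (Fin M → ZMod 2) → ℝ) (a : ℕ → ℝ) (ha : ∀ k, |a k| ≤ 1) :
    ((Finset.univ.filter (fun x => 1 ≤ |cv M h (fun g =>
      ∑ k ∈ Finset.range M, a k * (rr M k g * DD M (2 ^ k) g)) x|)).card : ℝ) ≤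
      2 * (Fintype.card (Fin M → ZMod 2) : ℝ) * ∑ b, |h b| := by
  have h1 := burk_sum M h a ha M le_rfl
  have h2 := Finset.sum_le_sum (fun x (_ : x ∈ Finset.univ) => burkU_ge (cv M h (DD M (2 ^ M)) x)
      (cv M h (fun g => ∑ k ∈ Finset.range M, a k * (rr M k g * DD M (2 ^ k) g)) x))
  rw [Finset.sum_sub_distrib, ← Finset.mul_sum, Finset.sum_boole] at h2
  have h3 := cv_norm M h (DD M (2 ^ M))
  rw [DD_norm M M le_rfl] at h3
  linarith

lemma burk_weak (M : ℕ) (h : (Fin M → ZMod 2) → ℝ) (a : ℕ → ℝ) (ha : ∀ k, |a k| ≤ 1)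
    (μ : ℝ) (hμ : 0 < μ) :
    μ * ((Finset.univ.filter (fun x => μ ≤ |cv M h (fun g =>
      ∑ k ∈ Finset.range M, a k * (rr M k g * DD M (2 ^ k) g)) x|)).card : ℝ) ≤
      2 * (Fintype.card (Fin M → ZMod 2) : ℝ) * ∑ b, |h b| := by
  have h1 := burk_weak_one M (fun b => h b / μ) a ha
  have h2 : ∀ K x, cv M (fun b => h b / μ) K x = cv M h K x / μ := by
    intro K x
    simp only [cv, Finset.sum_div]
    apply Finset.sum_congr rfl
    intros; ring
  simp only [h2, abs_div, abs_of_pos hμ, one_le_div hμ, ← Finset.sum_div] at h1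
  rw [← mul_div_assoc, le_div_iff₀ hμ] at h1
  linarith

lemma weak_finite (M n : ℕ) (hn : 2 ≤ n) (hM : n < 2 ^ M) (h : (Fin M → ZMod 2) → ℝ)
    (lam : ℝ) (hl : 0 < lam) :
    lam * ((Finset.univ.filter (fun x => lam < |cv M h (fun g => (1 / logSum n) * PP M n g) x|)).card
      : ℝ) ≤ 8 * (Fintype.card (Fin M → ZMod 2) : ℝ) * ∑ b, |h b| := by
  obtain ⟨a, E, h1, h2, h3⟩ := PP_decomp M M le_rfl n hM
  have hpos : 0 < logSum n := by
    have : logSum 2 ≤ logSum n := logSum_mono hn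
    have h2 : logSum 2 = 1 := by simp [logSum]
    linarith
  set T1 := cv M (fun b => h b * WW M n b) (fun g => ∑ k ∈ Finset.range M,
    (a k / logSum n) * (rr M k g * DD M (2 ^ k) g)) with hT1
  set T2 := cv M h (fun g => E g / logSum n) with hT2
  have hdec : ∀ x, cv M h (fun g => (1 / logSum n) * PP M n g) x = WW M n x * T1 x + T2 x := by
    intro x
    simp only [hT1, hT2, cv, Finset.mul_sum (s := Finset.univ), ← Finset.sum_add_distrib]
    apply Finset.sum_congr rfl
    intro b _
    have : ∑ k ∈ Finset.range M, (a k / logSum n) * (rr M k (x + b) * DD M (2 ^ k) (x + b)) =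
      (1 / logSum n) * ∑ k ∈ Finset.range M, a k * (rr M k (x + b) * DD M (2 ^ k) (x + b)) := by
      rw [Finset.mul_sum]
      apply Finset.sum_congr rfl
      intros; ring
    rw [this, h3, WW_add]
    ring
  have w1 := burk_weak M (fun b => h b * WW M n b) (fun k => a k / logSum n) (by
    intro k
    rw [abs_div, abs_of_pos hpos, div_le_one hpos]
    exact h1 k) (lam / 2) (by linarith)
  rw [← hT1] at w1
  simp only [abs_mul, WW_abs, mul_one] at w1
  have w2 : lam / 2 * ((Finset.univ.filter (fun x => lam / 2 ≤ |T2 x|)).card : ℝ) ≤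
      2 * (Fintype.card (Fin M → ZMod 2) : ℝ) * ∑ b, |h b| := by
    have c1 := cv_norm M h (fun g => E g / logSum n)
    rw [← hT2] at c1
    simp only [abs_div, ← Finset.sum_div, abs_of_pos hpos] at c1
    have c2 : (∑ g, |E g|) / logSum n ≤ 2 * (Fintype.card (Fin M → ZMod 2) : ℝ) := by
      rw [div_le_iff₀ hpos]; linarith
    have c3 : lam / 2 * ((Finset.univ.filter (fun x => lam / 2 ≤ |T2 x|)).card : ℝ) ≤ ∑ x, |T2 x| := by
      calc _ = ∑ x ∈ Finset.univ.filter (fun x => lam / 2 ≤ |T2 x|), lam / 2 := by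
            rw [Finset.sum_const, nsmul_eq_mul, mul_comm]
        _ ≤ ∑ x ∈ Finset.univ.filter (fun x => lam / 2 ≤ |T2 x|), |T2 x| := by
            apply Finset.sum_le_sum
            intro x hx
            exact (Finset.mem_filter.1 hx).2
        _ ≤ _ := Finset.sum_le_sum_of_subset_of_nonneg (Finset.filter_subset _ _)
            (fun _ _ _ => abs_nonneg _)
    have c4 := mul_le_mul_of_nonneg_left c2 (Finset.sum_nonneg (fun b (_ : b ∈ Finset.univ) => abs_nonneg (h b)))
    linarith
  have hsub : Finset.univ.filter (fun x => lam < |cv M h (fun g => (1 / logSum n) * PP M n g) x|) ⊆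
      Finset.univ.filter (fun x => lam / 2 ≤ |T1 x|) ∪ Finset.univ.filter (fun x => lam / 2 ≤ |T2 x|) := by
    intro x hx
    have hx := (Finset.mem_filter.1 hx).2
    rw [hdec] at hx
    have := abs_add_le (WW M n x * T1 x) (T2 x)
    rw [abs_mul, WW_abs, one_mul] at this
    simp only [Finset.mem_union, Finset.mem_filter, Finset.mem_univ, true_and]
    by_contra hcon
    push Not at hcon
    linarith [hcon.1, hcon.2]
  have hcard : ((Finset.univ.filter (fun x => lam < |cv M h (fun g => (1 / logSum n) * PP M n g) x|)).card
      : ℝ) ≤ (Finset.univ.filter (fun x => lam / 2 ≤ |T1 x|)).card +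
        (Finset.univ.filter (fun x => lam / 2 ≤ |T2 x|)).card := by
    exact_mod_cast (Finset.card_le_card hsub).trans (Finset.card_union_le _ _)
  have := mul_le_mul_of_nonneg_left hcard hl.le
  linarith

/-! ### From the unit interval to the finite group -/

/-- The first `M` binary digits. -/
def digs (M : ℕ) (x : ℝ) : Fin M → ZMod 2 := fun i => (binDigit i x : ZMod 2)

lemma binDigit_lt (k : ℕ) (x : ℝ) : binDigit k x < 2 := Nat.mod_lt _ (by norm_num)

lemma binDigit_cases (k : ℕ) (x : ℝ) : binDigit k x = 0 ∨ binDigit k x = 1 := by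
  have := binDigit_lt k x
  omega

lemma binDigit_eq_zero_iff (k : ℕ) (x : ℝ) : (binDigit k x : ZMod 2) = 0 ↔ binDigit k x = 0 := by
  rcases binDigit_cases k x with h | h <;> simp [h]

lemma floor_succ (x : ℝ) (hx : 0 ≤ x) (k : ℕ) :
    ⌊x * 2 ^ (k + 1)⌋ = 2 * ⌊x * 2 ^ k⌋ + binDigit k x := by
  have h1 : (⌊x * 2 ^ (k + 1)⌋) / 2 = ⌊x * 2 ^ k⌋ := by
    have := Int.floor_div_natCast (x * 2 ^ (k + 1)) 2
    rw [pow_succ, ← mul_assoc] at *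
    push_cast at this
    rw [mul_div_assoc, div_self (by norm_num), mul_one] at this
    exact this.symm
  have h2 : 0 ≤ ⌊x * 2 ^ (k + 1)⌋ := Int.floor_nonneg.2 (by positivity)
  unfold binDigit
  omega

lemma rademacher_eq (k : ℕ) (x : ℝ) (hx : 0 ≤ x) :
    rademacher k x = if binDigit k x = 0 then 1 else -1 := by
  unfold rademacher r0
  have h1 := floor_succ x hx k
  rw [mul_comm (2 ^ k) x]
  have h2 := Int.floor_add_fract (x * 2 ^ k)
  have h3 : x * 2 ^ (k + 1) = 2 * (x * 2 ^ k) := by ring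
  rw [h3] at h1
  have h4 := Int.floor_le (2 * (x * 2 ^ k))
  have h5 := Int.lt_floor_add_one (2 * (x * 2 ^ k))
  rw [h1] at h4 h5
  push_cast at h4 h5
  rcases binDigit_cases k x with h | h
  · rw [h] at h4 h5 ⊢
    rw [if_pos, if_pos rfl]
    push_cast at h5
    linarith
  · rw [h] at h4 h5 ⊢
    rw [if_neg, if_neg (by norm_num)]
    push_cast at h4
    linarith

lemma rademacher_digs (M k : ℕ) (hk : k < M) (x : ℝ) (hx : 0 ≤ x) :
    rademacher k x = rr M k (digs M x) := by
  rw [rademacher_eq k x hx]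
  simp only [rr, hk, dif_pos, digs, binDigit_eq_zero_iff]

lemma walsh_digs (M k : ℕ) (hk : k < 2 ^ M) (x : ℝ) (hx : 0 ≤ x) :
    walsh k x = WW M k (digs M x) := by
  unfold walsh WW
  apply Finset.prod_congr rfl
  intro i _
  split_ifs with h
  · apply rademacher_digs M i _ x hx
    by_contra hcon
    rw [Nat.testBit_lt_two_pow (lt_of_lt_of_le hk
      (Nat.pow_le_pow_right (by norm_num) (not_lt.1 hcon)))] at h
    exact absurd h (by simp)
  · rfl

lemma FKernel_digs (M n : ℕ) (hn : n < 2 ^ M) (x : ℝ) (hx : 0 ≤ x) :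
    FKernel n x = (1 / logSum n) * PP M n (digs M x) := by
  unfold FKernel PP dirichletKernel DD
  congr 1
  apply Finset.sum_congr rfl
  intro i _
  congr 1
  apply Finset.sum_congr rfl
  intro k hk
  have := Finset.mem_range.1 hk
  exact walsh_digs M k (by omega) x hx

lemma digs_floor (M : ℕ) (x y : ℝ) (hx : x ∈ Set.Ico (0:ℝ) 1) (hy : y ∈ Set.Ico (0:ℝ) 1)
    (h : ∀ i < M, binDigit i x = binDigit i y) : ⌊x * 2 ^ M⌋ = ⌊y * 2 ^ M⌋ := by
  induction M with
  | zero =>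
    have e1 : ⌊x⌋ = 0 := Int.floor_eq_zero_iff.2 hx
    have e2 : ⌊y⌋ = 0 := Int.floor_eq_zero_iff.2 hy
    simp [e1, e2]
  | succ M ih =>
    rw [floor_succ x hx.1, floor_succ y hy.1, ih (fun i hi => h i (by omega)), h M (by omega)]

lemma digs_eq (M : ℕ) (x y : ℝ) (h : digs M x = digs M y) (i : ℕ) (hi : i < M) :
    binDigit i x = binDigit i y := by
  have := congrFun h ⟨i, hi⟩
  simp only [digs] at this
  rcases binDigit_cases i x with h1 | h1 <;> rcases binDigit_cases i y with h2 | h2 <;>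
    simp_all

lemma eq_of_digits (x y : ℝ) (hx : x ∈ Set.Ico (0:ℝ) 1) (hy : y ∈ Set.Ico (0:ℝ) 1)
    (h : ∀ i, binDigit i x = binDigit i y) : x = y := by
  by_contra hne
  have hpos : 0 < |x - y| := abs_pos.2 (sub_ne_zero.2 hne)
  obtain ⟨M, hM⟩ := exists_pow_lt_of_lt_one hpos (by norm_num : (1/2 : ℝ) < 1)
  have h1 := Int.abs_sub_lt_one_of_floor_eq_floor (digs_floor M x y hx hy (fun i _ => h i))
  rw [← sub_mul, abs_mul, abs_of_pos (by positivity : (0:ℝ) < 2 ^ M)] at h1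
  have h2 : (1/2 : ℝ) ^ M * 2 ^ M = 1 := by rw [← mul_pow]; norm_num
  have h3 := mul_lt_mul_of_pos_right hM (by positivity : (0:ℝ) < 2 ^ M)
  linarith

lemma measurable_binDigit (k : ℕ) : Measurable (binDigit k) := by
  have h1 : Measurable (fun x : ℝ => ⌊x * 2 ^ (k + 1)⌋) :=
    Int.measurable_floor.comp (measurable_id.mul_const _)
  exact (measurable_from_top (f := fun z : ℤ => z.toNat % 2)).comp h1

lemma measurableSet_fiber (M : ℕ) (b : Fin M → ZMod 2) : MeasurableSet {x | digs M x = b} := by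
  have : {x | digs M x = b} = ⋂ i : Fin M, (binDigit i) ⁻¹' {n | (n : ZMod 2) = b i} := by
    ext x
    simp [digs, funext_iff]
  rw [this]
  exact MeasurableSet.iInter (fun i => measurable_binDigit i (MeasurableSpace.measurableSet_top))

lemma measure_fiber (M : ℕ) (b : Fin M → ZMod 2) :
    unitMeasure {x | digs M x = b} ≤ ENNReal.ofReal (1 / 2 ^ M) := by
  unfold unitMeasure
  rw [Measure.restrict_apply (measurableSet_fiber M b)]
  by_cases hne : ({x | digs M x = b} ∩ Set.Ico (0:ℝ) 1).Nonempty
  · obtain ⟨y, hy1, hy2⟩ := hne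
    have hsub : {x | digs M x = b} ∩ Set.Ico (0:ℝ) 1 ⊆
        Set.Ico ((⌊y * 2 ^ M⌋ : ℝ) / 2 ^ M) (((⌊y * 2 ^ M⌋ : ℝ) + 1) / 2 ^ M) := by
      rintro x ⟨hx1, hx2⟩
      have hf := digs_floor M x y hx2 hy2 (digs_eq M x y (hx1.trans hy1.symm))
      rw [← hf]
      constructor
      · rw [div_le_iff₀ (by positivity)]
        exact Int.floor_le _
      · rw [lt_div_iff₀ (by positivity)]
        exact Int.lt_floor_add_one _
    refine (measure_mono hsub).trans ?_
    rw [Real.volume_Ico]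
    apply ENNReal.ofReal_le_ofReal
    apply le_of_eq
    ring
  · rw [Set.not_nonempty_iff_eq_empty.1 hne]
    simp

/-- Binary expansions with infinitely many zeros. -/
lemma digit_of_sum (d : ℕ → ℕ) (hd : ∀ k, d k < 2) (hz : ∀ k, ∃ j ≥ k, d j = 0) :
    0 ≤ ∑' k, (d k : ℝ) / 2 ^ (k + 1) ∧
      ∀ k, binDigit k (∑' k, (d k : ℝ) / 2 ^ (k + 1)) = d k := by
  have hd' : ∀ k, (d k : ℝ) ≤ 1 := fun k => by exact_mod_cast Nat.lt_succ_iff.1 (hd k)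
  have hgeo : HasSum (fun j : ℕ => (1 : ℝ) / 2 ^ (j + 1)) 1 := by
    have := hasSum_geometric_two' (1 : ℝ)
    refine this.congr_fun ?_ <;> try (intro j; rw [pow_succ]; field_simp)
  have hsum : ∀ k, Summable (fun j => (d (j + k) : ℝ) / 2 ^ (j + 1)) := by
    intro k
    refine Summable.of_nonneg_of_le (fun j => by positivity) (fun j => ?_) hgeo.summable
    gcongr
    exact hd' _
  set T : ℕ → ℝ := fun k => ∑' j, (d (j + k) : ℝ) / 2 ^ (j + 1) with hT
  have hT0 : ∀ k, 0 ≤ T k := fun k => tsum_nonneg (fun j => by positivity)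
  have hT1 : ∀ k, T k < 1 := by
    intro k
    obtain ⟨j, hj, hj0⟩ := hz k
    rw [← hgeo.tsum_eq]
    refine Summable.tsum_lt_tsum (i := j - k) (fun i => ?_) ?_ (hsum k) hgeo.summable
    · gcongr
      exact hd' _
    · rw [show j - k + k = j by omega, hj0]
      simp
  have hTs : ∀ k, 2 * T k = d k + T (k + 1) := by
    intro k
    simp only [hT]
    rw [(hsum k).tsum_eq_zero_add, mul_add, ← tsum_mul_left]
    congr 1
    · simp; ring
    · apply tsum_congr
      intro j
      rw [show j + 1 + k = j + (k + 1) by ring]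
      field_simp
      ring
  have hm : ∀ k, ∃ m : ℕ, T 0 * 2 ^ k = m + T k := by
    intro k
    induction k with
    | zero => exact ⟨0, by simp⟩
    | succ k ih =>
      obtain ⟨m, hm⟩ := ih
      refine ⟨2 * m + d k, ?_⟩
      push_cast
      rw [pow_succ]
      linarith [hTs k]
  have hT00 : ∑' k, (d k : ℝ) / 2 ^ (k + 1) = T 0 := rfl
  rw [hT00]
  refine ⟨hT0 0, fun k => ?_⟩
  obtain ⟨m, hm⟩ := hm k
  have h1 : ⌊T 0 * 2 ^ (k + 1)⌋ = ((2 * m + d k : ℕ) : ℤ) := by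
    rw [Int.floor_eq_iff]
    have := hTs k
    have h0 := hT0 (k + 1)
    have h1 := hT1 (k + 1)
    push_cast
    rw [pow_succ]
    constructor <;> linarith
  unfold binDigit
  rw [h1]
  have := hd k
  omega

lemma dyadicAdd_digs (M : ℕ) (x t : ℝ)
    (h : ∀ k, ∃ j ≥ k, binDigit j x = binDigit j t) :
    0 ≤ dyadicAdd x t ∧ digs M (dyadicAdd x t) = digs M x + digs M t := by
  have h1 : ∀ k, |(binDigit k x : ℝ) - (binDigit k t : ℝ)| =
      (((binDigit k x + binDigit k t) % 2 : ℕ) : ℝ) := by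
    intro k
    rcases binDigit_cases k x with h1 | h1 <;> rcases binDigit_cases k t with h2 | h2 <;>
      simp [h1, h2]
  have h2 := digit_of_sum (fun k => (binDigit k x + binDigit k t) % 2)
    (fun k => Nat.mod_lt _ (by norm_num)) (fun k => by
      obtain ⟨j, hj, hj2⟩ := h k
      exact ⟨j, hj, by rw [hj2]; omega⟩)
  have h3 : dyadicAdd x t = ∑' k, (((binDigit k x + binDigit k t) % 2 : ℕ) : ℝ) / 2 ^ (k + 1) := by
    unfold dyadicAdd
    simp only [h1]
  rw [h3]
  refine ⟨h2.1, ?_⟩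
  ext i
  simp only [digs, Pi.add_apply]
  rw [h2.2 i]
  simp

lemma ae_good (x : ℝ) : ∀ᵐ t ∂(volume.restrict (Set.Ico (0:ℝ) 1)),
    ∀ k, ∃ j ≥ k, binDigit j x = binDigit j t := by
  rw [ae_all_iff]
  intro k
  rw [ae_restrict_iff' measurableSet_Ico]
  have hfin : Set.Finite {t | t ∈ Set.Ico (0:ℝ) 1 ∧ ∀ j ≥ k, binDigit j x ≠ binDigit j t} := by
    apply Set.Finite.of_finite_image (f := digs k) (Set.toFinite _)
    rintro t ⟨ht, ht2⟩ s ⟨hs, hs2⟩ hts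
    apply eq_of_digits t s ht hs
    intro i
    by_cases hi : i < k
    · exact digs_eq k t s hts i hi
    · have a1 := ht2 i (by omega)
      have a2 := hs2 i (by omega)
      have b0 := binDigit_lt i x
      have b1 := binDigit_lt i t
      have b2 := binDigit_lt i s
      omega
  have : volume {t | t ∈ Set.Ico (0:ℝ) 1 ∧ ∀ j ≥ k, binDigit j x ≠ binDigit j t} = 0 :=
    hfin.measure_zero _
  rw [ae_iff]
  convert this using 2
  ext t
  simp [and_assoc]

lemma conv_eq (M n : ℕ) (hn : n < 2 ^ M) (f : ℝ → ℝ) (hf : Integrable f unitMeasure) (x : ℝ) :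
    dyadicConv f (FKernel n) x = cv M (fun b => ∫ t in {t | digs M t = b}, f t ∂unitMeasure)
      (fun g => (1 / logSum n) * PP M n g) (digs M x) := by
  unfold dyadicConv cv
  have h1 : ∫ t in Set.Ico (0:ℝ) 1, f t * FKernel n (dyadicAdd x t) =
      ∫ t, ∑ b, ({t | digs M t = b}.indicator f t) *
        ((1 / logSum n) * PP M n (digs M x + b)) ∂unitMeasure := by
    apply integral_congr_ae
    filter_upwards [ae_good x] with t ht
    obtain ⟨a1, a2⟩ := dyadicAdd_digs M x t ht
    rw [FKernel_digs M n hn _ a1, a2, Finset.sum_eq_single (digs M t)]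
    · simp [Set.indicator]
    · intro b _ hb
      rw [Set.indicator_of_notMem]
      · simp
      · exact fun h => hb h.symm
    · simp
  rw [h1, integral_finsetSum]
  · apply Finset.sum_congr rfl
    intro b _
    rw [integral_mul_const, integral_indicator (measurableSet_fiber M b)]
  · intro b _
    exact (hf.indicator (measurableSet_fiber M b)).mul_const _

lemma sum_abs_le (M : ℕ) (f : ℝ → ℝ) (hf : Integrable f unitMeasure) :
    ∑ b, |∫ t in {t | digs M t = b}, f t ∂unitMeasure| ≤ ∫ x, |f x| ∂unitMeasure := by
  calc ∑ b, |∫ t in {t | digs M t = b}, f t ∂unitMeasure|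
      ≤ ∑ b, ∫ t in {t | digs M t = b}, |f t| ∂unitMeasure :=
        Finset.sum_le_sum (fun b _ => abs_integral_le_integral_abs)
    _ = ∫ t in ⋃ b ∈ (Finset.univ : Finset (Fin M → ZMod 2)), {t | digs M t = b}, |f t| ∂unitMeasure := by
        rw [integral_biUnion_finset]
        · intro b _
          exact measurableSet_fiber M b
        · intro b _ c _ hbc
          rw [Function.onFun, Set.disjoint_left]
          intro t ht ht'
          exact hbc (ht.symm.trans ht')
        · intro b _
          exact hf.abs.integrableOn
    _ = _ := by
        have : (⋃ b ∈ (Finset.univ : Finset (Fin M → ZMod 2)), {t | digs M t = b}) = Set.univ := by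
          ext t; simp
        rw [this, Measure.restrict_univ]

/-- the Nörlund logarithmic means `f ↦ f ∗ F_n` are uniformly of weak type
`(1,1)` on `[0,1)`. -/
theorem stmt18 : ∃ C > (0:ℝ), ∀ n : ℕ, 2 ≤ n → ∀ f : ℝ → ℝ, Measurable f →
    Integrable f unitMeasure → ∀ lam > (0:ℝ),
    lam * (unitMeasure {x | lam < |dyadicConv f (FKernel n) x|}).toReal ≤
      C * ∫ x, |f x| ∂unitMeasure := by
  refine ⟨8, by norm_num, fun n hn f _ hf lam hl => ?_⟩
  set M := n with hM
  have hnM : n < 2 ^ M := Nat.lt_two_pow_self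
  set h : (Fin M → ZMod 2) → ℝ := fun b => ∫ t in {t | digs M t = b}, f t ∂unitMeasure with hh
  have hw := weak_finite M n hn hnM h lam hl
  set B := Finset.univ.filter (fun x => lam < |cv M h (fun g => (1 / logSum n) * PP M n g) x|) with hB
  have hcardG : (Fintype.card (Fin M → ZMod 2) : ℝ) = 2 ^ M := by simp [ZMod.card]
  rw [hcardG] at hw
  have hsub : {x | lam < |dyadicConv f (FKernel n) x|} ⊆ ⋃ b ∈ B, {x | digs M x = b} := by
    intro x hx
    rw [Set.mem_ofPred_eq, conv_eq M n hnM f hf x] at hx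
    simp only [Set.mem_iUnion]
    exact ⟨digs M x, by simpa [hB] using hx, rfl⟩
  have hmeas : unitMeasure {x | lam < |dyadicConv f (FKernel n) x|} ≤
      ENNReal.ofReal (B.card * (1 / 2 ^ M)) := by
    refine (measure_mono hsub).trans ((measure_biUnion_finset_le _ _).trans ?_)
    refine (Finset.sum_le_sum (fun b _ => measure_fiber M b)).trans ?_
    rw [Finset.sum_const, nsmul_eq_mul, ENNReal.ofReal_mul (by positivity), ENNReal.ofReal_natCast]
  have hreal := ENNReal.toReal_le_of_le_ofReal (by positivity) hmeas
  have hs := sum_abs_le M f hf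
  have h2M : (0:ℝ) < 2 ^ M := by positivity
  calc _ ≤ lam * (B.card * (1 / 2 ^ M)) := mul_le_mul_of_nonneg_left hreal hl.le
    _ = (lam * B.card) / 2 ^ M := by ring
    _ ≤ (8 * 2 ^ M * ∑ b, |h b|) / 2 ^ M := by gcongr
    _ = 8 * ∑ b, |h b| := by field_simp
    _ ≤ _ := by linarith

end
end
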